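/- arXiv:1005.0181 — 3 statements merged into one kernel-verified Lean document; each statement's English description precedes it below -/
import Mathlib

section
/- There exist a bounded limit-periodic potential V : ℤ → ℝ and a Schrödinger operator H with potential V such that: (a) for every E ∈ [−4,4], the complex number E belongs to σ(H); and (b) the set {E ∈ [−4,4] : liminf_{N→∞} (1/N)·log‖A_N(E,V)‖ = 0} contains a dense Gδ subset of [−4,4]. -/
open Filter Matrix

/-- The transfer matrix `A_N(E,V) = ∏_{n=1}^N [[E − V(N−n), −1],[1,0]]`,
with the `n = 1` factor leftmost. -/
noncomputable def transferMatrix (V : ℤ → ℝ) (E : ℝ) (N : ℕ) : Matrix (Fin 2) (Fin 2) ℝ :=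
  (((List.range N).map
    (fun n => !![E - V ((N : ℤ) - ((n : ℤ) + 1)), -1; (1 : ℝ), 0])).prod)

/-- Operator norm (Euclidean, i.e. ℓ²→ℓ²) of a 2×2 real matrix. -/
noncomputable def opNorm (A : Matrix (Fin 2) (Fin 2) ℝ) : ℝ :=
  ‖LinearMap.toContinuousLinearMap (Matrix.toEuclideanLin A)‖

/-- `H` is a Schrödinger operator on `ℓ²(ℤ,ℂ)` with potential `V`. -/
def IsSchrodingerOp (V : ℤ → ℝ)
    (H : lp (fun _ : ℤ => ℂ) 2 →L[ℂ] lp (fun _ : ℤ => ℂ) 2) : Prop :=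
  ∀ ψ : lp (fun _ : ℤ => ℂ) 2, ∀ n : ℤ,
    H ψ n = ψ (n + 1) + ψ (n - 1) + (V n : ℂ) * ψ n

/-- `V` is `p`-periodic. -/
def IsPeriodic (V : ℤ → ℝ) (p : ℕ) : Prop :=
  ∀ n : ℤ, V (n + (p : ℤ)) = V n

/-- `V` is limit-periodic: a uniform limit of periodic potentials. -/
def IsLimitPeriodic (V : ℤ → ℝ) : Prop :=
  ∃ (W : ℕ → ℤ → ℝ) (p : ℕ → ℕ),
    (∀ k, 1 ≤ p k ∧ IsPeriodic (W k) (p k)) ∧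
    (∀ ε > (0 : ℝ), ∃ K : ℕ, ∀ k ≥ K, ∀ n : ℤ, |V n - W k n| ≤ ε)

/-- `(1/N)·log‖A_N(E,V)‖`. -/
noncomputable def logNormRate (V : ℤ → ℝ) (E : ℝ) (N : ℕ) : ℝ :=
  (1 / (N : ℝ)) * Real.log (opNorm (transferMatrix V E N))

/-- Individual (upper) Lyapunov exponent `limsup_N (1/N) log‖A_N(E,V)‖`. -/
noncomputable def lyapExp (V : ℤ → ℝ) (E : ℝ) : ℝ :=
  Filter.limsup (fun N : ℕ => logNormRate V E N) Filter.atTop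

/-- Bottom of the (real trace of the) spectrum of `H`. -/
noncomputable def specInf (H : lp (fun _ : ℤ => ℂ) 2 →L[ℂ] lp (fun _ : ℤ => ℂ) 2) : ℝ :=
  sInf {x : ℝ | (x : ℂ) ∈ spectrum ℂ H}

/-!
The potential is a sum of periodic perturbations of the free operator, whose energy `2` has the
constant eigenfunction. Suppose a `p`-periodic potential has a `p`-periodic solution `u` at energy
`e`. Adding a perturbation that is constant on blocks of `L` periods and takes the values `0, A / 2,
-A / 2` on consecutive blocks, the restriction of `u` to a single block is an approximate
eigenfunction at the energies `e`, `e + A / 2` or `e - A / 2`: its error lives at the two ends of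
the block, whereas its mass grows linearly in `L`. Since the operator on the circle `ℤ/(3pL)ℤ` is
symmetric, it has an eigenvalue within `A / 4` of each of them once `L` is large. Moving towards a
target energy `E` turns a distance `A` into `3 / 4 * A`, so periodic eigenvalues at stage `k` come
within `(3 / 4) ^ k * r` of every `E ∈ [2 - r, 2 + r]`.

Each perturbation vanishes on its first block, so the limit potential agrees with the `k`-th
approximant on `L` of its periods. There, truncated periodic solutions are quasimodes, which puts
`E` in the spectrum; and the monodromy matrix at a periodic eigenvalue fixes a vector and has
determinant `1`, hence is unipotent, so the transfer matrices over these `L` periods grow at most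
linearly in `L`. The logarithmic growth rate is therefore small at large scales for a dense set of
energies, and the Baire category theorem gives the dense `Gδ` set.
-/

section PeriodicFunctions

variable {α : Type*} {p : ℕ} {u : ℤ → ℝ}

theorem periodic_apply_emod {f : ℤ → α} (hf : Function.Periodic f p) (n : ℤ) :
    f (n % p) = f n := by
  rw [Int.emod_def, mul_comm]
  exact hf.sub_int_mul_eq _

theorem periodic_of_dvd {f : ℤ → α} {q : ℕ} (hf : Function.Periodic f p) (h : p ∣ q) :
    Function.Periodic f q := by
  obtain ⟨m, rfl⟩ := h
  rw [mul_comm, Nat.cast_mul]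
  exact hf.nat_mul m

theorem sum_range_mul_of_periodic [AddCommMonoid α] {f : ℤ → α} (hf : Function.Periodic f p)
    (m : ℕ) : ∑ i ∈ Finset.range (p * m), f i = m • ∑ i ∈ Finset.range p, f i := by
  induction m with
  | zero => simp
  | succ m ih =>
    have hshift (i : ℕ) : f (p * m + i : ℕ) = f i := by
      rw [← hf.nat_mul m i]
      congr 1
      push_cast
      ring
    rw [Nat.mul_succ, Finset.sum_range_add, ih, succ_nsmul]
    simp only [hshift]

/-- The squared `ℓ²` norm of `u` over the window `[0, p)`, used for `p`-periodic `u`. -/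
def periodEnergy (p : ℕ) (u : ℤ → ℝ) : ℝ :=
  ∑ i ∈ Finset.range p, u i ^ 2

theorem sq_le_periodEnergy (hp : 0 < p) (hu : Function.Periodic u p) (n : ℤ) :
    u n ^ 2 ≤ periodEnergy p u := by
  have hnonneg : 0 ≤ n % p := Int.emod_nonneg _ (by positivity)
  have hlt : n % p < p := Int.emod_lt_of_pos _ (by positivity)
  rw [← periodic_apply_emod hu n, ← Int.toNat_of_nonneg hnonneg]
  exact Finset.single_le_sum (f := fun i : ℕ => u i ^ 2) (fun _ _ => sq_nonneg _)
    (Finset.mem_range.2 (by lia))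

theorem periodEnergy_pos (hp : 0 < p) (hu : Function.Periodic u p) (hne : u ≠ 0) :
    0 < periodEnergy p u := by
  obtain ⟨n, hn⟩ := Function.ne_iff.1 hne
  exact (pow_pos (abs_pos.2 hn) 2).trans_le ((sq_abs (u n)).trans_le (sq_le_periodEnergy hp hu n))

theorem periodEnergy_mul (hu : Function.Periodic u p) (m : ℕ) :
    periodEnergy (p * m) u = m * periodEnergy p u := by
  have hsq : Function.Periodic (fun n => u n ^ 2) p := hu.comp (· ^ 2)
  simpa only [periodEnergy, nsmul_eq_mul] using sum_range_mul_of_periodic hsq m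

end PeriodicFunctions

section Quasimodes

theorem exists_hasEigenvalue_abs_sub_le {𝕜 F : Type*} [RCLike 𝕜] [NormedAddCommGroup F]
    [InnerProductSpace 𝕜 F] [FiniteDimensional 𝕜 F] {T : F →ₗ[𝕜] F} (hT : T.IsSymmetric)
    {ψ : F} (hψ : ψ ≠ 0) {e η : ℝ} (h : ‖T ψ - (e : 𝕜) • ψ‖ ≤ η * ‖ψ‖) :
    ∃ μ : ℝ, Module.End.HasEigenvalue T (μ : 𝕜) ∧ |μ - e| ≤ η := by
  by_contra! hfar
  set b := hT.eigenvectorBasis rfl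
  set μ := hT.eigenvalues rfl
  have hη : 0 ≤ η := nonneg_of_mul_nonneg_left ((norm_nonneg _).trans h) (norm_pos_iff.2 hψ)
  have hgap (i) : η < |μ i - e| := hfar _ (hT.hasEigenvalue_eigenvalues rfl i)
  have hcoord (i) : ‖b.repr (T ψ - (e : 𝕜) • ψ) i‖ ^ 2 = |μ i - e| ^ 2 * ‖b.repr ψ i‖ ^ 2 := by
    have : b.repr (T ψ - (e : 𝕜) • ψ) i = ((μ i - e : ℝ) : 𝕜) * b.repr ψ i := by
      rw [map_sub, map_smul, PiLp.sub_apply, PiLp.smul_apply,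
        hT.eigenvectorBasis_apply_self_apply rfl, smul_eq_mul, RCLike.ofReal_sub, sub_mul]
    rw [this, norm_mul, RCLike.norm_ofReal, mul_pow]
  obtain ⟨i₀, hi₀⟩ : ∃ i, b.repr ψ i ≠ 0 := by
    by_contra! hzero
    exact hψ (b.repr.map_eq_zero_iff.1 (by ext i; exact hzero i))
  have hlt : (η * ‖ψ‖) ^ 2 < ‖T ψ - (e : 𝕜) • ψ‖ ^ 2 := by
    rw [mul_pow, ← b.repr.norm_map ψ, ← b.repr.norm_map (T ψ - _), EuclideanSpace.norm_sq_eq,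
      EuclideanSpace.norm_sq_eq, Finset.mul_sum]
    simp only [hcoord]
    refine Finset.sum_lt_sum (fun i _ => by gcongr; exact (hgap i).le) ⟨i₀, Finset.mem_univ _, ?_⟩
    have := norm_pos_iff.2 hi₀
    gcongr
    exact hgap i₀
  exact hlt.not_ge (pow_le_pow_left₀ (norm_nonneg _) h 2)

theorem mem_spectrum_of_quasimodes {𝕜 F : Type*} [NontriviallyNormedField 𝕜] [NormedAddCommGroup F]
    [NormedSpace 𝕜 F] {T : F →L[𝕜] F} {e : 𝕜}
    (h : ∀ ε > (0 : ℝ), ∃ ψ : F, ψ ≠ 0 ∧ ‖T ψ - e • ψ‖ ≤ ε * ‖ψ‖) : e ∈ spectrum 𝕜 T := by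
  rw [spectrum.mem_iff]
  rintro ⟨U, hU⟩
  set R : F →L[𝕜] F := ↑U⁻¹
  obtain ⟨ψ, hψ, hle⟩ := h (‖R‖ + 1)⁻¹ (by positivity)
  have hinv : R (e • ψ - T ψ) = ψ := by
    have : R * (algebraMap 𝕜 (F →L[𝕜] F) e - T) = 1 := hU ▸ U.inv_mul
    simpa [Algebra.algebraMap_eq_smul_one] using congr($this ψ)
  have hlt : ‖R‖ * (‖R‖ + 1)⁻¹ < 1 := by
    rw [← div_eq_mul_inv, div_lt_one (by positivity)]
    exact lt_add_one _
  refine lt_irrefl ‖ψ‖ ?_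
  calc ‖ψ‖ ≤ ‖R‖ * ‖T ψ - e • ψ‖ := by
        rw [norm_sub_rev]
        simpa only [hinv] using R.le_opNorm (e • ψ - T ψ)
    _ ≤ ‖R‖ * (‖R‖ + 1)⁻¹ * ‖ψ‖ := by
        rw [mul_assoc]
        gcongr
    _ < ‖ψ‖ := mul_lt_of_lt_one_left (norm_pos_iff.2 hψ) hlt

end Quasimodes

section PeriodicEigenfunctions

variable {W ψ : ℤ → ℝ} {p : ℕ} {e η : ℝ}

/-- The function `(H_V - e) u`, where `(H_V u)(n) = u (n + 1) + u (n - 1) + V n * u n` acts on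
arbitrary sequences. -/
def eigenDefect (V : ℤ → ℝ) (e : ℝ) (u : ℤ → ℝ) (n : ℤ) : ℝ :=
  u (n + 1) + u (n - 1) + (V n - e) * u n

/-- `u` is a nonzero `p`-periodic solution of `H_V u = e u`. -/
structure IsPeriodicEigenfunction (V : ℤ → ℝ) (p : ℕ) (e : ℝ) (u : ℤ → ℝ) : Prop where
  periodic : Function.Periodic u p
  ne_zero : u ≠ 0
  eigenDefect_eq_zero : ∀ n, eigenDefect V e u n = 0

/-- The Schrödinger operator on the discrete circle `ℤ/pℤ`. -/
noncomputable def cyclicSchrodinger (W : ZMod p → ℝ) :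
    EuclideanSpace ℝ (ZMod p) →ₗ[ℝ] EuclideanSpace ℝ (ZMod p) where
  toFun f := WithLp.toLp 2 fun x => f (x + 1) + f (x - 1) + W x * f x
  map_add' f g := by
    ext x
    simp only [PiLp.add_apply]
    ring
  map_smul' c f := by
    ext x
    simp only [PiLp.smul_apply, smul_eq_mul, RingHom.id_apply]
    ring

theorem cyclicSchrodinger_apply (W : ZMod p → ℝ) (f : EuclideanSpace ℝ (ZMod p)) (x : ZMod p) :
    cyclicSchrodinger W f x = f (x + 1) + f (x - 1) + W x * f x :=
  rfl

theorem isSymmetric_cyclicSchrodinger [NeZero p] (W : ZMod p → ℝ) :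
    (cyclicSchrodinger W).IsSymmetric := by
  intro f g
  have hforward : ∑ x, g x * f (x + 1) = ∑ x, g (x - 1) * f x := by
    rw [← Equiv.sum_comp (Equiv.subRight (1 : ZMod p))]
    simp
  have hbackward : ∑ x, g x * f (x - 1) = ∑ x, g (x + 1) * f x := by
    rw [← Equiv.sum_comp (Equiv.addRight (1 : ZMod p))]
    simp
  simp only [PiLp.inner_apply, RCLike.inner_apply, conj_trivial, cyclicSchrodinger_apply, mul_add,
    add_mul, Finset.sum_add_distrib, hforward, hbackward, mul_left_comm (g _), mul_assoc]
  ring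

theorem sum_zmod_eq_sum_range [NeZero p] (f : ℤ → ℝ) :
    ∑ x : ZMod p, f x.val = ∑ i ∈ Finset.range p, f i := by
  obtain ⟨k, rfl⟩ := Nat.exists_eq_succ_of_ne_zero (NeZero.ne p)
  exact Fin.sum_univ_eq_sum_range (fun i : ℕ => f i) (k + 1)

/-- The restriction to one period, viewed as a vector over `ℤ/pℤ`. -/
noncomputable def cyclicRestriction (p : ℕ) (f : ℤ → ℝ) : EuclideanSpace ℝ (ZMod p) :=
  WithLp.toLp 2 fun x => f x.val

theorem cyclicRestriction_intCast [NeZero p] {f : ℤ → ℝ} (hf : Function.Periodic f p) (n : ℤ) :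
    cyclicRestriction p f n = f n := by
  rw [cyclicRestriction, PiLp.toLp_apply, ZMod.val_intCast, periodic_apply_emod hf]

theorem norm_cyclicRestriction_sq [NeZero p] (f : ℤ → ℝ) :
    ‖cyclicRestriction p f‖ ^ 2 = periodEnergy p f := by
  rw [EuclideanSpace.norm_sq_eq, periodEnergy, ← sum_zmod_eq_sum_range fun n => f n ^ 2]
  simp [cyclicRestriction]

theorem cyclicSchrodinger_cyclicRestriction_sub [NeZero p] (hψ : Function.Periodic ψ p)
    (W : ℤ → ℝ) (e : ℝ) :
    cyclicSchrodinger (cyclicRestriction p W) (cyclicRestriction p ψ) -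
      e • cyclicRestriction p ψ = cyclicRestriction p (eigenDefect W e ψ) := by
  ext x
  have hsucc := cyclicRestriction_intCast hψ (x.val + 1)
  have hpred := cyclicRestriction_intCast hψ (x.val - 1)
  push_cast [ZMod.natCast_zmod_val] at hsucc hpred
  rw [PiLp.sub_apply, PiLp.smul_apply, cyclicSchrodinger_apply, hsucc, hpred]
  simp only [cyclicRestriction, eigenDefect, smul_eq_mul]
  ring

theorem isPeriodicEigenfunction_of_hasEigenvector [NeZero p] (hW : Function.Periodic W p)
    {v : EuclideanSpace ℝ (ZMod p)}
    (hv : Module.End.HasEigenvector (cyclicSchrodinger (cyclicRestriction p W)) e v) :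
    IsPeriodicEigenfunction W p e fun n => v n := by
  refine ⟨fun n => by simp, fun hzero => hv.2 ?_, fun n => ?_⟩
  · ext x
    simpa using congrFun hzero x.val
  · have heq := congr($hv.apply_eq_smul (n : ZMod p))
    rw [cyclicSchrodinger_apply, cyclicRestriction_intCast hW, PiLp.smul_apply, smul_eq_mul] at heq
    rw [eigenDefect]
    push_cast
    linear_combination heq

theorem exists_isPeriodicEigenfunction_of_quasimode [NeZero p] (hW : Function.Periodic W p)
    (hψ : Function.Periodic ψ p) (hpos : 0 < periodEnergy p ψ) (hη : 0 ≤ η)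
    (h : periodEnergy p (eigenDefect W e ψ) ≤ η ^ 2 * periodEnergy p ψ) :
    ∃ μ u, |μ - e| ≤ η ∧ IsPeriodicEigenfunction W p μ u := by
  have hne : cyclicRestriction p ψ ≠ 0 := fun hzero => hpos.ne <| by
    rw [← norm_cyclicRestriction_sq, hzero, norm_zero, zero_pow two_ne_zero]
  have hquasi : ‖cyclicSchrodinger (cyclicRestriction p W) (cyclicRestriction p ψ) -
      e • cyclicRestriction p ψ‖ ≤ η * ‖cyclicRestriction p ψ‖ := by
    rw [← pow_le_pow_iff_left₀ (norm_nonneg _) (by positivity) two_ne_zero, mul_pow,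
      cyclicSchrodinger_cyclicRestriction_sub hψ, norm_cyclicRestriction_sq,
      norm_cyclicRestriction_sq]
    exact h
  obtain ⟨μ, hμ, hdist⟩ := exists_hasEigenvalue_abs_sub_le
    (isSymmetric_cyclicSchrodinger (cyclicRestriction p W)) hne hquasi
  obtain ⟨v, hv⟩ := hμ.exists_hasEigenvector
  exact ⟨μ, _, hdist, isPeriodicEigenfunction_of_hasEigenvector hW hv⟩

end PeriodicEigenfunctions

section BlockPerturbation

variable {V W u : ℤ → ℝ} {p q : ℕ} {e η S : ℝ} {s : Set ℤ} {n : ℤ}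

theorem eigenDefect_indicator_eq_zero (h : n ∈ s → eigenDefect V e u n = 0)
    (hsucc : n + 1 ∈ s ↔ n ∈ s) (hpred : n - 1 ∈ s ↔ n ∈ s) :
    eigenDefect V e (s.indicator u) n = 0 := by
  by_cases hn : n ∈ s
  · simpa only [eigenDefect, Set.indicator_of_mem hn, Set.indicator_of_mem (hsucc.2 hn),
      Set.indicator_of_mem (hpred.2 hn)] using h hn
  · simp [eigenDefect, hn, hsucc, hpred]

theorem sq_eigenDefect_indicator_le (h : n ∈ s → eigenDefect V e u n = 0)
    (hS : ∀ m, u m ^ 2 ≤ S) : eigenDefect V e (s.indicator u) n ^ 2 ≤ 4 * S := by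
  have hsq_add {a b : ℝ} (ha : a ^ 2 ≤ S) (hb : b ^ 2 ≤ S) : (a + b) ^ 2 ≤ 4 * S := by
    linarith [add_sq_le (a := a) (b := b)]
  have htrunc (t : Set ℤ) (m : ℤ) : t.indicator u m ^ 2 ≤ S := by
    by_cases hm : m ∈ t
    · simpa only [Set.indicator_of_mem hm] using hS m
    · simpa [hm] using (sq_nonneg _).trans (hS m)
  by_cases hn : n ∈ s
  · -- Subtracting the equation for `u` leaves only the neighbours outside `s`.
    have hcompl : eigenDefect V e (s.indicator u) n =
        -(sᶜ.indicator u (n + 1) + sᶜ.indicator u (n - 1)) := by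
      have hsplit (m : ℤ) := congrFun (s.indicator_self_add_compl u) m
      have hu := h hn
      simp only [eigenDefect, Set.indicator_of_mem hn, Pi.add_apply] at hu hsplit ⊢
      linear_combination hu + hsplit (n + 1) + hsplit (n - 1)
    rw [hcompl, neg_sq]
    exact hsq_add (htrunc _ _) (htrunc _ _)
  · simpa [eigenDefect, hn] using hsq_add (htrunc s (n + 1)) (htrunc s (n - 1))

/-- The union of the blocks `[kM, (k + 1)M)` with `k ≡ c` modulo `q`. -/
def blockSet (M q c : ℕ) : Set ℤ :=
  {n | n / M % q = c}

variable {M c : ℕ}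

theorem periodic_apply_ediv {α : Type*} {g : ℤ → α} (hM : 0 < M) (hg : Function.Periodic g q) :
    Function.Periodic (fun n : ℤ => g (n / M)) (q * M : ℕ) := fun n => by
  have : (n + (q * M : ℕ)) / M = n / M + q := by
    push_cast
    exact Int.add_mul_ediv_right _ _ (by positivity)
  simp only [this]
  exact hg _

theorem periodic_indicator_blockSet (hM : 0 < M) (hu : Function.Periodic u (q * M : ℕ)) :
    Function.Periodic ((blockSet M q c).indicator u) (q * M : ℕ) := by
  have hmem : Function.Periodic (· ∈ blockSet M q c) ((q * M : ℕ) : ℤ) :=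
    periodic_apply_ediv (g := fun m => m % q = c) hM fun m => by simp
  intro n
  classical
  simp only [Set.indicator_apply, hu n]
  exact if_congr (iff_of_eq (hmem n)) rfl rfl

theorem add_one_mem_blockSet_iff (hM : 0 < M) (hn : n % M ≠ M - 1) :
    n + 1 ∈ blockSet M q c ↔ n ∈ blockSet M q c := by
  have hlt : n % M < M := Int.emod_lt_of_pos n (by positivity)
  have : (n + 1) / M = n / M :=
    ((Int.ediv_emod_unique (r := n % M + 1) (by positivity)).2
      ⟨by linarith [Int.emod_add_mul_ediv n M],
        by linarith [Int.emod_nonneg n (b := M) (by positivity)], by lia⟩).1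
  simp only [blockSet, Set.mem_ofPred_eq, this]

theorem sub_one_mem_blockSet_iff (hM : 0 < M) (hn : n % M ≠ 0) :
    n - 1 ∈ blockSet M q c ↔ n ∈ blockSet M q c := by
  have hn' : (n - 1) % M ≠ M - 1 := fun h => by
    obtain ⟨-, -, hdvd⟩ := (Int.emod_eq_iff (by positivity)).1 h
    rw [sub_sub_sub_cancel_right, dvd_sub_right dvd_rfl] at hdvd
    exact hn (Int.emod_eq_zero_of_dvd hdvd)
  rw [← add_one_mem_blockSet_iff hM hn', sub_add_cancel]

theorem mul_add_mem_blockSet {i : ℕ} (hi : i < M) (hc : c < q) :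
    ((c * M + i : ℕ) : ℤ) ∈ blockSet M q c := by
  have : (c * M + i) / M % q = c := by
    rw [mul_comm c, Nat.mul_add_div (by lia), Nat.div_eq_of_lt hi, Nat.add_zero,
      Nat.mod_eq_of_lt hc]
  exact congrArg Nat.cast this

theorem periodEnergy_le_periodEnergy_indicator_blockSet (hc : c < q)
    (hu : Function.Periodic u M) :
    periodEnergy M u ≤ periodEnergy (q * M) ((blockSet M q c).indicator u) := by
  calc periodEnergy M u
      = ∑ i ∈ Finset.range M, (blockSet M q c).indicator u (c * M + i : ℕ) ^ 2 := by
        refine Finset.sum_congr rfl fun i hi => ?_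
        rw [Set.indicator_of_mem (mul_add_mem_blockSet (Finset.mem_range.1 hi) hc)]
        have := hu.nat_mul c i
        push_cast
        rw [add_comm, this]
    _ ≤ periodEnergy ((c + 1) * M) ((blockSet M q c).indicator u) := by
        rw [periodEnergy, add_one_mul, Finset.sum_range_add]
        exact le_add_of_nonneg_left (Finset.sum_nonneg fun _ _ => sq_nonneg _)
    _ ≤ periodEnergy (q * M) ((blockSet M q c).indicator u) :=
        Finset.sum_le_sum_of_subset_of_nonneg
          (Finset.range_mono (Nat.mul_le_mul_right M hc)) fun _ _ _ => sq_nonneg _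

theorem periodEnergy_eigenDefect_indicator_blockSet_le (hM : 0 < M) (hS : ∀ n, u n ^ 2 ≤ S)
    (h : ∀ n ∈ blockSet M q c, eigenDefect V e u n = 0) :
    periodEnergy (q * M) (eigenDefect V e ((blockSet M q c).indicator u)) ≤ 8 * q * S := by
  have hS0 : 0 ≤ S := (sq_nonneg _).trans (hS 0)
  set edge : ℤ → ℝ := fun n => (if n % M = 0 then 4 * S else 0) + if n % M = M - 1 then 4 * S else 0
  have hle (n : ℤ) : eigenDefect V e ((blockSet M q c).indicator u) n ^ 2 ≤ edge n := by
    have hsq := sq_eigenDefect_indicator_le (h n) hS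
    simp only [edge]
    split_ifs with hfirst hlast hlast
    · linarith
    · linarith
    · linarith
    · rw [eigenDefect_indicator_eq_zero (h n) (add_one_mem_blockSet_iff hM hlast)
        (sub_one_mem_blockSet_iff hM hfirst)]
      norm_num
  have hedge : Function.Periodic edge M := fun n => by simp [edge]
  calc periodEnergy (q * M) (eigenDefect V e ((blockSet M q c).indicator u))
      ≤ ∑ i ∈ Finset.range (M * q), edge i := by
        rw [mul_comm M q]
        exact Finset.sum_le_sum fun i _ => hle i
    _ = q * ∑ i ∈ Finset.range M, edge i := by
        rw [sum_range_mul_of_periodic hedge, nsmul_eq_mul]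
    _ = q * (4 * S + 4 * S) := by
        have hfirst : ∀ i ∈ Finset.range M, edge i =
            (if i = 0 then 4 * S else 0) + if i = M - 1 then 4 * S else 0 := fun i hi => by
          have hmod : (i : ℤ) % M = i := Int.emod_eq_of_lt (by positivity) (by simpa using hi)
          have hcast : (i : ℤ) = M - 1 ↔ i = M - 1 := by lia
          simp only [edge, hmod, hcast, Nat.cast_eq_zero]
        rw [Finset.sum_congr rfl hfirst]
        simp [Finset.sum_add_distrib, hM]
    _ = 8 * q * S := by ring

theorem IsPeriodicEigenfunction.exists_block_perturbation
    (hu : IsPeriodicEigenfunction W p e u) (hW : Function.Periodic W p) (hp : 0 < p)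
    {g : ℤ → ℝ} (hg : Function.Periodic g q) (hc : c < q) (hη : 0 ≤ η) {L : ℕ}
    (hqL : 8 * q ≤ η ^ 2 * L) :
    ∃ μ v, |μ - (e + g c)| ≤ η ∧
      IsPeriodicEigenfunction (fun n => W n + g (n / (p * L : ℕ))) (q * (p * L)) μ v := by
  have hq : (0 : ℝ) < q := by exact_mod_cast c.zero_le.trans_lt hc
  have hL : 0 < L := Nat.pos_of_ne_zero (by rintro rfl; rw [Nat.cast_zero] at hqL; linarith)
  have hM : 0 < p * L := Nat.mul_pos hp hL
  have : NeZero (q * (p * L)) := ⟨(Nat.mul_pos (by lia) hM).ne'⟩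
  have hblock : ∀ n ∈ blockSet (p * L) q c,
      eigenDefect (fun n => W n + g (n / (p * L : ℕ))) (e + g c) u n = 0 := fun n hn => by
    have hgn : g (n / (p * L : ℕ)) = g c := by
      rw [← periodic_apply_emod hg, show n / (p * L : ℕ) % q = c from hn]
    have := hu.eigenDefect_eq_zero n
    simp only [eigenDefect, hgn] at this ⊢
    linear_combination this
  have huM : Function.Periodic u (p * L : ℕ) := periodic_of_dvd hu.periodic (dvd_mul_right p L)
  have hdvd : p ∣ q * (p * L) := (dvd_mul_right p L).mul_left q
  have hmass : L * periodEnergy p u ≤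
      periodEnergy (q * (p * L)) ((blockSet (p * L) q c).indicator u) := by
    rw [← periodEnergy_mul hu.periodic]
    exact periodEnergy_le_periodEnergy_indicator_blockSet hc huM
  have hS : 0 < periodEnergy p u := periodEnergy_pos hp hu.periodic hu.ne_zero
  refine exists_isPeriodicEigenfunction_of_quasimode
    ((periodic_of_dvd hW hdvd).add (periodic_apply_ediv hM hg))
    (periodic_indicator_blockSet hM (periodic_of_dvd hu.periodic hdvd))
    (lt_of_lt_of_le (by positivity) hmass) hη ?_
  calc periodEnergy (q * (p * L)) _
      ≤ 8 * q * periodEnergy p u := periodEnergy_eigenDefect_indicator_blockSet_le hM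
        (sq_le_periodEnergy hp hu.periodic) hblock
    _ ≤ η ^ 2 * L * periodEnergy p u := by gcongr
    _ ≤ η ^ 2 * periodEnergy (q * (p * L)) ((blockSet (p * L) q c).indicator u) := by
      rw [mul_assoc]
      gcongr

end BlockPerturbation

section TransferMatrices

variable {V V' u : ℤ → ℝ} {E B e : ℝ} {N p : ℕ}

theorem transferMatrix_zero (V : ℤ → ℝ) (E : ℝ) : transferMatrix V E 0 = 1 := by
  simp [transferMatrix]

theorem transferMatrix_succ (V : ℤ → ℝ) (E : ℝ) (N : ℕ) :
    transferMatrix V E (N + 1) = !![E - V N, -1; 1, 0] * transferMatrix V E N := by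
  -- The index in the definition is an integer, so `List.range N` is coerced through the list monad.
  have hcast (l : List ℕ) : (l.flatMap fun a : ℕ => (pure (a : ℤ) : List ℤ)) = l.map (↑) :=
    List.flatMap_pure_eq_map _ _
  simp only [transferMatrix, List.bind_eq_flatMap, hcast, List.map_map]
  rw [List.range_succ_eq_map, List.map_cons, List.prod_cons, List.map_map]
  congr 1
  · simp
  · congr 2
    funext n
    simp

theorem transferMatrix_congr (h : ∀ n < N, V n = V' n) :
    transferMatrix V E N = transferMatrix V' E N := by
  induction N with
  | zero => simp only [transferMatrix_zero]
  | succ N ih =>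
    rw [transferMatrix_succ, transferMatrix_succ, ih fun n hn => h n (hn.trans N.lt_succ_self),
      h N N.lt_succ_self]

theorem transferMatrix_add_of_periodic (hV : Function.Periodic V p) (E : ℝ) (N : ℕ) :
    transferMatrix V E (N + p) = transferMatrix V E N * transferMatrix V E p := by
  induction N with
  | zero => rw [zero_add, transferMatrix_zero, one_mul]
  | succ N ih =>
    rw [Nat.add_right_comm, transferMatrix_succ, transferMatrix_succ, ih, mul_assoc, Nat.cast_add,
      hV]

theorem transferMatrix_mul_of_periodic (hV : Function.Periodic V p) (E : ℝ) (L : ℕ) :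
    transferMatrix V E (p * L) = transferMatrix V E p ^ L := by
  induction L with
  | zero => rw [mul_zero, transferMatrix_zero, pow_zero]
  | succ L ih => rw [Nat.mul_succ, transferMatrix_add_of_periodic hV, ih, pow_succ]

theorem det_transferMatrix (V : ℤ → ℝ) (E : ℝ) (N : ℕ) : (transferMatrix V E N).det = 1 := by
  induction N with
  | zero => rw [transferMatrix_zero, det_one]
  | succ N ih => rw [transferMatrix_succ, det_mul, ih, det_fin_two_of]; ring

theorem continuous_transferMatrix (V : ℤ → ℝ) (N : ℕ) :
    Continuous fun E => transferMatrix V E N := by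
  induction N with
  | zero => simpa only [transferMatrix_zero] using continuous_const
  | succ N ih =>
    simp only [transferMatrix_succ]
    refine Continuous.mul (continuous_matrix fun i j => ?_) ih
    fin_cases i <;> fin_cases j <;> first | exact continuous_const | exact continuous_sub_right _

theorem transferMatrix_mulVec (hu : ∀ n, eigenDefect V E u n = 0) (N : ℕ) :
    transferMatrix V E N *ᵥ ![u 0, u (-1)] = ![u N, u (N - 1)] := by
  induction N with
  | zero => simp [transferMatrix_zero]
  | succ N ih =>
    rw [transferMatrix_succ, ← mulVec_mulVec, ih]
    ext i
    fin_cases i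
    · have hN : u (N + 1) + u (N - 1) + (V N - E) * u N = 0 := hu N
      simp
      linear_combination -hN
    · simp

theorem IsPeriodicEigenfunction.initial_ne_zero (hu : IsPeriodicEigenfunction V p e u)
    (hp : 0 < p) : ![u 0, u (-1)] ≠ 0 := fun hzero => hu.ne_zero <| funext fun n => by
  have hsol := transferMatrix_mulVec hu.eigenDefect_eq_zero (n % p).toNat
  rw [hzero, mulVec_zero, Int.toNat_of_nonneg (Int.emod_nonneg _ (by positivity)),
    periodic_apply_emod hu.periodic] at hsol
  exact (congrFun hsol 0).symm

theorem IsPeriodicEigenfunction.transferMatrix_mulVec_initial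
    (hu : IsPeriodicEigenfunction V p e u) :
    transferMatrix V e p *ᵥ ![u 0, u (-1)] = ![u 0, u (-1)] := by
  have hpred := hu.periodic (-1)
  rw [transferMatrix_mulVec hu.eigenDefect_eq_zero, hu.periodic.eq, ← hpred, neg_add_eq_sub]

theorem mul_self_eq_zero_of_det_one_add {R : Type*} [CommRing R] {A : Matrix (Fin 2) (Fin 2) R}
    (hA : A.det = 0) (h : (1 + A).det = 1) : A * A = 0 := by
  rw [det_fin_two] at hA h
  simp only [Matrix.add_apply, one_apply_eq, ne_eq, zero_ne_one, one_ne_zero, not_false_eq_true,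
    one_apply_ne, zero_add] at h
  ext i j
  fin_cases i <;> fin_cases j <;> simp [mul_apply, Fin.sum_univ_two]
  · linear_combination A 0 0 * (h - hA) - hA
  · linear_combination A 0 1 * (h - hA)
  · linear_combination A 1 0 * (h - hA)
  · linear_combination A 1 1 * (h - hA) - hA

theorem one_add_pow_of_mul_self_eq_zero {R : Type*} [Ring R] {a : R} (ha : a * a = 0) (m : ℕ) :
    (1 + a) ^ m = 1 + m • a := by
  induction m with
  | zero => simp
  | succ m ih =>
    rw [pow_succ, ih, add_mul, one_mul, mul_add, mul_one, smul_mul_assoc, ha, smul_zero, add_zero,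
      succ_nsmul, add_assoc, add_comm a]

theorem pow_eq_one_add_nsmul_of_mulVec_eq {K : Type*} [Field K] {A : Matrix (Fin 2) (Fin 2) K}
    (hdet : A.det = 1) {v : Fin 2 → K} (hv : v ≠ 0) (hAv : A *ᵥ v = v) (m : ℕ) :
    A ^ m = 1 + m • (A - 1) := by
  have hdet_sub : (A - 1).det = 0 :=
    exists_mulVec_eq_zero_iff.1 ⟨v, hv, by rw [sub_mulVec, hAv, one_mulVec, sub_self]⟩
  have hsq : (A - 1) * (A - 1) = 0 :=
    mul_self_eq_zero_of_det_one_add hdet_sub (by rwa [add_sub_cancel])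
  simpa only [add_sub_cancel] using one_add_pow_of_mul_self_eq_zero hsq m

open scoped Matrix.Norms.L2Operator

theorem one_le_norm_of_det_eq_one {n 𝕜 : Type*} [Fintype n] [DecidableEq n] [Nonempty n]
    [RCLike 𝕜] {A : Matrix n n 𝕜} (hA : A.det = 1) : 1 ≤ ‖A‖ := by
  by_contra! hlt
  have hpow := tendsto_pow_atTop_nhds_zero_of_norm_lt_one hlt
  have hdet := (continuous_id.matrix_det.tendsto (0 : Matrix n n 𝕜)).comp hpow
  simp only [Function.comp_def, id_eq, det_pow, hA, one_pow, det_zero] at hdet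
  exact one_ne_zero (tendsto_nhds_unique tendsto_const_nhds hdet)

theorem opNorm_eq_norm (A : Matrix (Fin 2) (Fin 2) ℝ) : opNorm A = ‖A‖ :=
  rfl

theorem norm_step_le (a : ℝ) : ‖!![a, -1; 1, 0]‖ ≤ |a| + 1 := by
  have hsplit : !![a, -1; 1, 0] = diagonal ![a, 0] + !![0, -1; 1, 0] := by
    ext i j
    fin_cases i <;> fin_cases j <;> simp
  have hdiag : ‖(diagonal ![a, 0] : Matrix (Fin 2) (Fin 2) ℝ)‖ ≤ |a| := by
    rw [l2_opNorm_diagonal]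
    exact (pi_norm_le_iff_of_nonneg (abs_nonneg a)).2 fun i => by fin_cases i <;> simp
  have hrot : !![(0 : ℝ), -1; 1, 0] ∈ unitary (Matrix (Fin 2) (Fin 2) ℝ) := by
    have hstar : star !![(0 : ℝ), -1; 1, 0] = !![0, 1; -1, 0] := by
      ext i j
      fin_cases i <;> fin_cases j <;> simp
    rw [Unitary.mem_iff, hstar]
    simp [one_fin_two]
  rw [hsplit]
  exact (norm_add_le _ _).trans (add_le_add hdiag (CStarRing.norm_of_mem_unitary hrot).le)

theorem opNorm_transferMatrix_le (hB : ∀ n, |E - V n| ≤ B) (N : ℕ) :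
    opNorm (transferMatrix V E N) ≤ (B + 1) ^ N := by
  induction N with
  | zero => simp [transferMatrix_zero, opNorm_eq_norm]
  | succ N ih =>
    rw [opNorm_eq_norm] at ih ⊢
    have hB0 : 0 ≤ B + 1 := by linarith [abs_nonneg (E - V 0), hB 0]
    rw [transferMatrix_succ, pow_succ']
    refine (norm_mul_le _ _).trans (mul_le_mul ?_ ih (norm_nonneg _) hB0)
    exact (norm_step_le _).trans (by linarith [hB N])

theorem IsPeriodicEigenfunction.opNorm_transferMatrix_mul_le
    (hu : IsPeriodicEigenfunction V p e u) (hV : Function.Periodic V p) (hp : 0 < p)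
    (hB : ∀ n, |e - V n| ≤ B) (L : ℕ) :
    opNorm (transferMatrix V e (p * L)) ≤ 1 + L * ((B + 1) ^ p + 1) := by
  rw [transferMatrix_mul_of_periodic hV, pow_eq_one_add_nsmul_of_mulVec_eq
    (det_transferMatrix V e p) (hu.initial_ne_zero hp) hu.transferMatrix_mulVec_initial,
    opNorm_eq_norm]
  set A := transferMatrix V e p
  calc ‖1 + L • (A - 1)‖ ≤ ‖(1 : Matrix (Fin 2) (Fin 2) ℝ)‖ + ‖L • (A - 1)‖ := norm_add_le _ _
    _ ≤ 1 + L * (‖A‖ + 1) := by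
      rw [norm_one]
      gcongr
      refine (norm_nsmul_le).trans ?_
      gcongr
      simpa only [norm_one] using norm_sub_le A 1
    _ ≤ 1 + L * ((B + 1) ^ p + 1) := by
      gcongr
      exact opNorm_transferMatrix_le hB p

theorem continuous_logNormRate (V : ℤ → ℝ) (N : ℕ) : Continuous fun E => logNormRate V E N := by
  have hne (E : ℝ) : ‖transferMatrix V E N‖ ≠ 0 :=
    (zero_lt_one.trans_le (one_le_norm_of_det_eq_one (det_transferMatrix V E N))).ne'
  exact continuous_const.mul ((continuous_transferMatrix V N).norm.log hne)

theorem logNormRate_nonneg (V : ℤ → ℝ) (E : ℝ) (N : ℕ) : 0 ≤ logNormRate V E N :=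
  mul_nonneg (by positivity)
    (Real.log_nonneg (one_le_norm_of_det_eq_one (det_transferMatrix V E N)))

theorem logNormRate_congr (h : ∀ n < N, V n = V' n) :
    logNormRate V E N = logNormRate V' E N := by
  rw [logNormRate, logNormRate, transferMatrix_congr h]

end TransferMatrices

section HilbertSpace

variable {V W u : ℤ → ℝ} {p L : ℕ} {e η : ℝ}
  {H : lp (fun _ : ℤ => ℂ) 2 →L[ℂ] lp (fun _ : ℤ => ℂ) 2}

/-- The isometry `f ↦ f ∘ σ` between `ℓᵖ` spaces induced by a bijection `σ` of the index sets,
for finite `p`. -/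
noncomputable def lpCompEquiv {α β : Type*} (𝕜 : Type*) {E : Type*} [NormedField 𝕜]
    [NormedAddCommGroup E] [NormedSpace 𝕜 E] {p : ENNReal} [Fact (1 ≤ p)] (hp : 0 < p.toReal)
    (σ : α ≃ β) : lp (fun _ : β => E) p →ₗᵢ[𝕜] lp (fun _ : α => E) p where
  toFun f := ⟨f ∘ σ, memℓp_gen (((lp.memℓp f).summable hp).comp_injective σ.injective)⟩
  map_add' _ _ := rfl
  map_smul' _ _ := rfl
  norm_map' f := by
    rw [lp.norm_eq_tsum_rpow hp, lp.norm_eq_tsum_rpow hp]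
    exact congrArg (· ^ (1 / p.toReal)) (σ.tsum_eq fun i => ‖f i‖ ^ p.toReal)

theorem exists_isSchrodingerOp {C : ℝ} (hV : ∀ n, |V n| ≤ C) : ∃ H, IsSchrodingerOp V H := by
  have hp : 0 < (2 : ENNReal).toReal := by norm_num
  have hnorm (n : ℤ) : ‖(V n : ℂ) • ContinuousLinearMap.id ℂ ℂ‖ ≤ C := by
    rw [norm_smul, Complex.norm_real, ContinuousLinearMap.norm_id, mul_one]
    exact hV n
  refine ⟨(lpCompEquiv ℂ hp (Equiv.addRight (1 : ℤ))).toContinuousLinearMap +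
    (lpCompEquiv ℂ hp (Equiv.subRight (1 : ℤ))).toContinuousLinearMap +
    lp.mapCLM 2 (fun n => (V n : ℂ) • ContinuousLinearMap.id ℂ ℂ)
      ((abs_nonneg _).trans (hV 0)) hnorm, fun ψ n => rfl⟩

theorem lp_norm_sq_eq_sum {α : Type*} {E : α → Type*} [∀ i, NormedAddCommGroup (E i)] {f : lp E 2}
    {s : Finset α} (hf : ∀ i ∉ s, f i = 0) : ‖f‖ ^ 2 = ∑ i ∈ s, ‖f i‖ ^ 2 := by
  have hsum := lp.norm_rpow_eq_tsum (p := 2) (by norm_num) f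
  rw [tsum_eq_sum (s := s) fun i hi => by simp [hf i hi]] at hsum
  simpa using hsum

/-- The extension by zero of the window `[0, M)` of `u` to an element of `ℓ²(ℤ, ℂ)`. -/
noncomputable def windowState (M : ℕ) (u : ℤ → ℝ) : lp (fun _ : ℤ => ℂ) 2 :=
  ⟨fun n => ((Set.Ico 0 (M : ℤ)).indicator u n : ℝ),
    Memℓp.of_exponent_ge (memℓp_zero ((Set.finite_Ico 0 (M : ℤ)).subset fun _ hn =>
      Set.mem_of_indicator_ne_zero (Complex.ofReal_ne_zero.1 hn))) zero_le⟩

theorem norm_windowState_sq (M : ℕ) (u : ℤ → ℝ) : ‖windowState M u‖ ^ 2 = periodEnergy M u := by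
  have hout : ∀ n ∉ (Finset.range M).map Nat.castEmbedding, windowState M u n = 0 := fun n hn =>
    Complex.ofReal_eq_zero.2 <| Set.indicator_of_notMem (fun hmem => hn <| Finset.mem_map.2
      ⟨n.toNat, by simp only [Set.mem_Ico, Finset.mem_range] at hmem ⊢; lia,
        Int.toNat_of_nonneg hmem.1⟩) u
  rw [lp_norm_sq_eq_sum hout, Finset.sum_map, periodEnergy]
  refine Finset.sum_congr rfl fun i hi => ?_
  have hmem : (i : ℤ) ∈ Set.Ico 0 (M : ℤ) := by simpa using hi
  simp [windowState, Set.indicator_of_mem hmem]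

theorem IsSchrodingerOp.apply_windowState_sub (hH : IsSchrodingerOp V H) (e : ℝ) (u : ℤ → ℝ)
    (M : ℕ) (n : ℤ) : (H (windowState M u) - (e : ℂ) • windowState M u) n =
      (eigenDefect V e ((Set.Ico 0 (M : ℤ)).indicator u) n : ℝ) := by
  have hsub : (H (windowState M u) - (e : ℂ) • windowState M u) n =
    H (windowState M u) n - e * windowState M u n := rfl
  rw [hsub, hH, eigenDefect]
  simp only [windowState]
  push_cast
  ring

theorem IsSchrodingerOp.norm_apply_windowState_sub_sq_le (hH : IsSchrodingerOp V H) {M : ℕ} {S : ℝ}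
    (hS : ∀ n, u n ^ 2 ≤ S) (h : ∀ n ∈ Set.Ico 0 (M : ℤ), eigenDefect V e u n = 0) :
    ‖H (windowState M u) - (e : ℂ) • windowState M u‖ ^ 2 ≤ 16 * S := by
  have hnorm (n : ℤ) : ‖(H (windowState M u) - (e : ℂ) • windowState M u) n‖ ^ 2 =
      eigenDefect V e ((Set.Ico 0 (M : ℤ)).indicator u) n ^ 2 := by
    rw [hH.apply_windowState_sub, Complex.norm_real, Real.norm_eq_abs, sq_abs]
  have hS0 : 0 ≤ S := (sq_nonneg _).trans (hS 0)
  have hfar : ∀ n ∉ ({-1, 0, (M : ℤ) - 1, (M : ℤ)} : Finset ℤ),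
      (H (windowState M u) - (e : ℂ) • windowState M u) n = 0 := fun n hn => by
    simp only [Finset.mem_insert, Finset.mem_singleton, not_or] at hn
    rw [hH.apply_windowState_sub, eigenDefect_indicator_eq_zero (h n)
      (by simp only [Set.mem_Ico]; lia) (by simp only [Set.mem_Ico]; lia), Complex.ofReal_zero]
  rw [lp_norm_sq_eq_sum hfar]
  calc ∑ n ∈ ({-1, 0, (M : ℤ) - 1, (M : ℤ)} : Finset ℤ), _
      ≤ (Finset.card ({-1, 0, (M : ℤ) - 1, (M : ℤ)} : Finset ℤ)) • (4 * S) :=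
        Finset.sum_le_card_nsmul _ _ _ fun n _ =>
          (hnorm n).trans_le (sq_eigenDefect_indicator_le (h n) hS)
    _ ≤ 4 • (4 * S) := nsmul_le_nsmul_left (by positivity) Finset.card_le_four
    _ = 16 * S := by ring

theorem IsPeriodicEigenfunction.exists_quasimode (hu : IsPeriodicEigenfunction W p e u)
    (hp : 0 < p) (hH : IsSchrodingerOp V H) (hη : 0 ≤ η) (hηL : 16 ≤ η ^ 2 * L)
    (hVW : ∀ n ∈ Set.Ico 0 ((p * L : ℕ) : ℤ), V n = W n) :
    ∃ ψ, ψ ≠ 0 ∧ ‖H ψ - (e : ℂ) • ψ‖ ≤ η * ‖ψ‖ := by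
  have hL : 0 < L := Nat.pos_of_ne_zero (by rintro rfl; norm_num at hηL)
  have hS : 0 < periodEnergy p u := periodEnergy_pos hp hu.periodic hu.ne_zero
  have hdefect : ∀ n ∈ Set.Ico 0 ((p * L : ℕ) : ℤ), eigenDefect V e u n = 0 := fun n hn => by
    rw [eigenDefect, hVW n hn]
    exact hu.eigenDefect_eq_zero n
  have hnorm : ‖windowState (p * L) u‖ ^ 2 = L * periodEnergy p u := by
    rw [norm_windowState_sq, periodEnergy_mul hu.periodic]
  refine ⟨windowState (p * L) u, fun hzero => ?_, ?_⟩
  · rw [hzero, norm_zero, zero_pow two_ne_zero] at hnorm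
    exact (by positivity : 0 < L * periodEnergy p u).ne hnorm
  · refine (pow_le_pow_iff_left₀ (norm_nonneg _) (by positivity) two_ne_zero).1 ?_
    calc _ ≤ 16 * periodEnergy p u :=
          hH.norm_apply_windowState_sub_sq_le (sq_le_periodEnergy hp hu.periodic) hdefect
      _ ≤ η ^ 2 * L * periodEnergy p u := by gcongr
      _ = (η * ‖windowState (p * L) u‖) ^ 2 := by rw [mul_pow, hnorm, mul_assoc]

end HilbertSpace

section Baire

theorem dense_preimage_coe_of_subset_closure {X : Type*} [TopologicalSpace X] {s U : Set X}
    (hs : s ⊆ closure (interior s)) (hU : s ⊆ closure U) :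
    Dense ((↑) ⁻¹' U : Set s) := by
  have hinter : interior s ⊆ closure (s ∩ U) :=
    (Set.subset_inter subset_rfl (interior_subset.trans hU)).trans <|
      isOpen_interior.inter_closure.trans <|
        closure_mono (Set.inter_subset_inter_left U interior_subset)
  rw [Subtype.dense_iff, Subtype.image_preimage_coe]
  exact hs.trans (closure_minimal hinter isClosed_closure)

theorem liminf_eq_zero_of_forall_exists_lt {a : ℕ → ℝ} (ha : ∀ n, 0 ≤ a n)
    (h : ∀ ε > 0, ∀ N, ∃ n ≥ N, a n < ε) : liminf a atTop = 0 := by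
  have hfreq (ε : ℝ) (hε : 0 < ε) : ∃ᶠ n in atTop, a n ≤ ε := frequently_atTop.2 fun N =>
    (h ε hε N).imp fun _ => And.imp_right le_of_lt
  refine le_antisymm (le_of_forall_pos_le_add fun ε hε => ?_)
    (le_liminf_of_le (IsCoboundedUnder.of_frequently_le (hfreq 1 one_pos))
      (Eventually.of_forall ha))
  rw [zero_add]
  exact liminf_le_of_frequently_le (hfreq ε hε) (isBoundedUnder_of ⟨0, ha⟩)

theorem exists_dense_isGδ_liminf_eq_zero {X : Type*} [TopologicalSpace X] [BaireSpace X]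
    {f : ℕ → X → ℝ} (hf : ∀ n, Continuous (f n)) (hnonneg : ∀ n x, 0 ≤ f n x) {K : Set X}
    (hK : IsClosed K) (hdense : ∀ ε > 0, ∀ N, K ⊆ closure {x | ∃ n ≥ N, f n x < ε}) :
    ∃ G : Set X, IsGδ G ∧ Dense G ∧ ∀ x ∈ G ∩ K, liminf (fun n => f n x) atTop = 0 := by
  set U : ℕ → Set X := fun m => {x | ∃ n ≥ m, f n x < 1 / (m + 1)}
  have hopen (m : ℕ) : IsOpen (U m ∪ Kᶜ) := by
    have : U m = ⋃ n ≥ m, {x | f n x < 1 / (m + 1)} := by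
      ext x
      simp [U]
    rw [this]
    exact (isOpen_biUnion fun n _ => isOpen_lt (hf n) continuous_const).union hK.isOpen_compl
  have hdenseU (m : ℕ) : Dense (U m ∪ Kᶜ) := fun x => by
    rw [closure_union]
    exact (em (x ∈ K)).imp (fun hx => hdense _ Nat.one_div_pos_of_nat m hx)
      fun hx => subset_closure hx
  refine ⟨⋂ m, U m ∪ Kᶜ, .iInter_of_isOpen hopen, dense_iInter_of_isOpen hopen hdenseU,
    fun x hx => liminf_eq_zero_of_forall_exists_lt (fun n => hnonneg n x) fun ε hε N => ?_⟩
  obtain ⟨m, hm⟩ := exists_nat_one_div_lt hε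
  obtain ⟨n, hn, hlt⟩ := (Set.mem_iInter.1 hx.1 (max N m)).resolve_right (not_not_intro hx.2)
  have hle : 1 / (((max N m : ℕ) : ℝ) + 1) ≤ 1 / (m + 1) :=
    Nat.one_div_le_one_div (le_max_right N m)
  exact ⟨n, (le_max_left N m).trans hn, hlt.trans_le (hle.trans hm.le)⟩

end Baire

section Construction

variable {r : ℝ} {L : ℕ → ℕ} {k : ℕ} {n : ℤ}

/-- The `k`-th scale: how well the eigenvalues at stage `k` fill the interval `[2 - r, 2 + r]`. -/
noncomputable def amplitude (r : ℝ) (k : ℕ) : ℝ :=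
  r * (3 / 4) ^ k

/-- The period at stage `k`: each of the three blocks making up the next period consists of `L k`
current periods. -/
def stagePeriod (L : ℕ → ℕ) : ℕ → ℕ
  | 0 => 1
  | k + 1 => 3 * (stagePeriod L k * L k)

/-- The perturbation added at stage `k`, constant on the blocks of `L k` periods. Since the balanced
residue `Int.bmod · 3` runs through `0, 1, -1`, it vanishes on the block starting at the origin. -/
noncomputable def stageBump (r : ℝ) (L : ℕ → ℕ) (k : ℕ) (n : ℤ) : ℝ :=
  amplitude r k / 2 * ((n / (stagePeriod L k * L k : ℕ)).bmod 3 : ℤ)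

/-- The periodic potential obtained before stage `k`. -/
noncomputable def approximant (r : ℝ) (L : ℕ → ℕ) (k : ℕ) (n : ℤ) : ℝ :=
  ∑ i ∈ Finset.range k, stageBump r L i n

/-- The limit-periodic potential of the construction. -/
noncomputable def limitPotential (r : ℝ) (L : ℕ → ℕ) (n : ℤ) : ℝ :=
  ∑' k, stageBump r L k n

theorem amplitude_pos (hr : 0 < r) (k : ℕ) : 0 < amplitude r k := by
  unfold amplitude
  positivity

theorem amplitude_succ (r : ℝ) (k : ℕ) : amplitude r (k + 1) = 3 / 4 * amplitude r k := by
  unfold amplitude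
  ring

theorem amplitude_le (hr : 0 < r) (k : ℕ) : amplitude r k ≤ r :=
  mul_le_of_le_one_right hr.le (pow_le_one₀ (by norm_num) (by norm_num))

theorem tendsto_amplitude (r : ℝ) : Tendsto (amplitude r) atTop (nhds 0) := by
  have hpow : Tendsto (fun k : ℕ => (3 / 4 : ℝ) ^ k) atTop (nhds 0) :=
    tendsto_pow_atTop_nhds_zero_of_lt_one (by norm_num) (by norm_num)
  rw [← mul_zero r]
  exact hpow.const_mul r

theorem hasSum_amplitude_tail (r : ℝ) (k : ℕ) :
    HasSum (fun i => amplitude r (i + k) / 2) (2 * amplitude r k) := by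
  have hgeom : HasSum (fun i => amplitude r k / 2 * (3 / 4) ^ i)
      (amplitude r k / 2 * (1 - 3 / 4)⁻¹) :=
    (hasSum_geometric_of_lt_one (by norm_num) (by norm_num)).mul_left _
  have hterm (i : ℕ) : amplitude r (i + k) / 2 = amplitude r k / 2 * (3 / 4) ^ i := by
    unfold amplitude
    ring
  have hvalue : 2 * amplitude r k = amplitude r k / 2 * (1 - 3 / 4)⁻¹ := by ring
  simpa only [hterm, hvalue] using hgeom

theorem periodic_bmod (q : ℕ) : Function.Periodic (fun m : ℤ => (m.bmod q : ℝ)) q := fun m => by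
  simp

theorem norm_stageBump_le (hr : 0 < r) (L : ℕ → ℕ) (k : ℕ) (n : ℤ) :
    ‖stageBump r L k n‖ ≤ amplitude r k / 2 := by
  have hbmod (m : ℤ) : |(m.bmod 3 : ℝ)| ≤ 1 := by
    have hle := m.bmod_le (m := 3) (by norm_num)
    have hge := m.le_bmod (m := 3) (by norm_num)
    rw [abs_le]
    constructor <;> norm_cast
  have := amplitude_pos hr k
  rw [stageBump, norm_mul, Real.norm_of_nonneg (by positivity), Real.norm_eq_abs]
  exact mul_le_of_le_one_right (by positivity) (hbmod _)

theorem summable_stageBump (hr : 0 < r) (L : ℕ → ℕ) (n : ℤ) :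
    Summable fun k => stageBump r L k n :=
  .of_norm_bounded (hasSum_amplitude_tail r 0).summable fun k => norm_stageBump_le hr L k n

theorem abs_limitPotential_sub_approximant_le (hr : 0 < r) (L : ℕ → ℕ) (k : ℕ) (n : ℤ) :
    |limitPotential r L n - approximant r L k n| ≤ 2 * amplitude r k := by
  have htail : limitPotential r L n - approximant r L k n = ∑' i, stageBump r L (i + k) n :=
    sub_eq_iff_eq_add'.2 ((summable_stageBump hr L n).sum_add_tsum_nat_add k).symm
  rw [htail]
  exact tsum_of_norm_bounded (hasSum_amplitude_tail r k) fun i => norm_stageBump_le hr L (i + k) n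

theorem abs_limitPotential_le (hr : 0 < r) (L : ℕ → ℕ) (n : ℤ) :
    |limitPotential r L n| ≤ 2 * r := by
  simpa [approximant, amplitude] using abs_limitPotential_sub_approximant_le hr L 0 n

theorem stagePeriod_pos (hL : ∀ k, 0 < L k) (k : ℕ) : 0 < stagePeriod L k := by
  induction k with
  | zero => exact one_pos
  | succ k ih => exact Nat.mul_pos three_pos (Nat.mul_pos ih (hL k))

theorem monotone_stagePeriod_mul (hL : ∀ k, 0 < L k) : Monotone fun k => stagePeriod L k * L k :=
  monotone_nat_of_le_succ fun k => by
    calc stagePeriod L k * L k ≤ stagePeriod L (k + 1) := Nat.le_mul_of_pos_left _ three_pos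
      _ ≤ stagePeriod L (k + 1) * L (k + 1) := Nat.le_mul_of_pos_right _ (hL _)

theorem approximant_succ (r : ℝ) (L : ℕ → ℕ) (k : ℕ) :
    approximant r L (k + 1) = fun n => approximant r L k n + stageBump r L k n :=
  funext fun _ => Finset.sum_range_succ _ k

theorem periodic_approximant (r : ℝ) (hL : ∀ k, 0 < L k) (k : ℕ) :
    Function.Periodic (approximant r L k) (stagePeriod L k) := by
  induction k with
  | zero => exact fun _ => by simp [approximant]
  | succ k ih =>
    have hdvd : stagePeriod L k ∣ stagePeriod L (k + 1) := (dvd_mul_right _ (L k)).mul_left 3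
    have hbump : Function.Periodic (stageBump r L k) (stagePeriod L (k + 1)) :=
      (periodic_apply_ediv (Nat.mul_pos (stagePeriod_pos hL k) (hL k)) (periodic_bmod 3)).comp
        (amplitude r k / 2 * ·)
    rw [approximant_succ]
    exact (periodic_of_dvd ih hdvd).add hbump

theorem limitPotential_eq_approximant (r : ℝ) (hL : ∀ k, 0 < L k)
    (hn : n ∈ Set.Ico 0 ((stagePeriod L k * L k : ℕ) : ℤ)) :
    limitPotential r L n = approximant r L k n := by
  refine tsum_eq_sum fun i hi => ?_
  have hle : stagePeriod L k * L k ≤ stagePeriod L i * L i :=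
    monotone_stagePeriod_mul hL (by simpa using hi)
  have hdiv : n / (stagePeriod L i * L i : ℕ) = 0 :=
    Int.ediv_eq_zero_of_lt hn.1 (hn.2.trans_le (by exact_mod_cast hle))
  rw [stageBump, hdiv]
  simp

theorem isLimitPeriodic_limitPotential (hr : 0 < r) (hL : ∀ k, 0 < L k) :
    IsLimitPeriodic (limitPotential r L) := by
  refine ⟨approximant r L, stagePeriod L,
    fun k => ⟨stagePeriod_pos hL k, periodic_approximant r hL k⟩, fun ε hε => ?_⟩
  obtain ⟨K, hK⟩ := eventually_atTop.1 ((tendsto_amplitude r).eventually_lt_const (half_pos hε))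
  exact ⟨K, fun k hk n => (abs_limitPotential_sub_approximant_le hr L k n).trans
    (by linarith [hK k hk])⟩

end Construction

section Spectrum

variable {r E : ℝ} {L : ℕ → ℕ} {H : lp (fun _ : ℤ => ℂ) 2 →L[ℂ] lp (fun _ : ℤ => ℂ) 2}

/-- The repetition numbers `L` are large enough, compared with the data of the previous stages, for
the perturbation theory (`le_sq_mul`) and for the linear growth of the transfer matrices at a
periodic eigenvalue to be negligible (`log_lt`). The base `6 * r + 3` bounds a one-step transfer
matrix at all energies and potentials involved. -/
structure IsAdmissible (r : ℝ) (L : ℕ → ℕ) : Prop where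
  lt : ∀ k, k < L k
  le_sq_mul : ∀ k, 384 ≤ amplitude r k ^ 2 * L k
  log_lt : ∀ k, Real.log (1 + L k * ((6 * r + 3) ^ stagePeriod L k + 1)) / L k < 1 / (k + 1)

theorem IsAdmissible.pos (hL : IsAdmissible r L) (k : ℕ) : 0 < L k :=
  k.zero_le.trans_lt (hL.lt k)

theorem tendsto_log_one_add_mul_div {K : ℝ} (hK : 0 < K) :
    Tendsto (fun n : ℕ => Real.log (1 + n * K) / n) atTop (nhds 0) := by
  have htop : Tendsto (fun n : ℕ => 1 + n * K) atTop atTop :=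
    tendsto_atTop_add_const_left _ _ (tendsto_natCast_atTop_atTop.atTop_mul_const hK)
  have hlog := Real.isLittleO_log_id_atTop.comp_tendsto htop
  have hlinear : (fun n : ℕ => 1 + n * K) =O[atTop] fun n : ℕ => (n : ℝ) := by
    refine .of_bound (1 + K) ((eventually_ge_atTop 1).mono fun n hn => ?_)
    have hone : (1 : ℝ) ≤ n := by exact_mod_cast hn
    rw [Real.norm_of_nonneg (by positivity), Real.norm_of_nonneg (by positivity)]
    linarith
  exact (hlog.trans_isBigO hlinear).tendsto_div_nhds_zero

theorem exists_forall_stagePeriod {Q : ℕ → ℕ → ℕ → Prop} (h : ∀ k p, ∃ l, Q k p l) :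
    ∃ L : ℕ → ℕ, ∀ k, Q k (stagePeriod L k) (L k) := by
  choose f hf using h
  set P : ℕ → ℕ := fun k => Nat.rec 1 (fun i p => 3 * (p * f i p)) k
  have hP (k : ℕ) : stagePeriod (fun i => f i (P i)) k = P k := by
    induction k with
    | zero => rfl
    | succ k ih => rw [stagePeriod, ih]
  exact ⟨fun k => f k (P k), fun k => hP k ▸ hf k _⟩

theorem exists_isAdmissible (hr : 0 < r) : ∃ L, IsAdmissible r L := by
  have hlarge (k p : ℕ) : ∃ l : ℕ, k < l ∧ 384 ≤ amplitude r k ^ 2 * l ∧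
      Real.log (1 + l * ((6 * r + 3) ^ p + 1)) / l < 1 / (k + 1) := by
    have hsq : Tendsto (fun l : ℕ => amplitude r k ^ 2 * l) atTop atTop :=
      tendsto_natCast_atTop_atTop.const_mul_atTop (pow_pos (amplitude_pos hr k) 2)
    have hlog := tendsto_log_one_add_mul_div (K := (6 * r + 3) ^ p + 1) (by positivity)
    exact ((eventually_gt_atTop k).and ((hsq.eventually_ge_atTop 384).and
      (hlog.eventually_lt_const Nat.one_div_pos_of_nat))).exists
  obtain ⟨L, hL⟩ := exists_forall_stagePeriod hlarge
  exact ⟨L, fun k => (hL k).1, fun k => (hL k).2.1, fun k => (hL k).2.2⟩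

theorem isPeriodicEigenfunction_free : IsPeriodicEigenfunction (fun _ => 0) 1 2 fun _ => 1 where
  periodic _ := rfl
  ne_zero := one_ne_zero
  eigenDefect_eq_zero _ := by norm_num [eigenDefect]

theorem IsAdmissible.exists_isPeriodicEigenfunction (hr : 0 < r) (hL : IsAdmissible r L)
    (hE : |E - 2| ≤ r) (k : ℕ) : ∃ e u, |e - E| ≤ amplitude r k ∧
      IsPeriodicEigenfunction (approximant r L k) (stagePeriod L k) e u := by
  induction k with
  | zero =>
    refine ⟨2, fun _ => 1, ?_, isPeriodicEigenfunction_free⟩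
    rwa [amplitude, pow_zero, mul_one, abs_sub_comm]
  | succ k ih =>
    obtain ⟨e, u, he, hu⟩ := ih
    have hA := amplitude_pos hr k
    set A := amplitude r k
    set g : ℤ → ℝ := fun m => A / 2 * (m.bmod 3 : ℤ)
    have hg : Function.Periodic g (3 : ℕ) := (periodic_bmod 3).comp (A / 2 * ·)
    have hg_one : g (1 : ℕ) = A / 2 := by simp [g, show (1 : ℤ).bmod 3 = 1 from rfl]
    have hg_two : g (2 : ℕ) = -(A / 2) := by simp [g, show (2 : ℤ).bmod 3 = -1 from rfl]
    obtain ⟨c, hc, hshift⟩ : ∃ c < 3, |e + g (c : ℕ) - E| ≤ A / 2 := by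
      rw [abs_le] at he
      rcases le_total e E with hle | hle
      · exact ⟨1, by norm_num, by rw [hg_one, abs_le]; constructor <;> linarith⟩
      · exact ⟨2, by norm_num, by rw [hg_two, abs_le]; constructor <;> linarith⟩
    obtain ⟨μ, v, hμ, hv⟩ := hu.exists_block_perturbation (η := A / 4) (L := L k)
      (periodic_approximant r hL.pos k) (stagePeriod_pos hL.pos k) hg hc (by positivity)
      (by push_cast; linarith [hL.le_sq_mul k])
    refine ⟨μ, v, ?_, ?_⟩
    · rw [amplitude_succ]
      linarith [abs_sub_le μ (e + g c) E]
    · rw [approximant_succ]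
      exact hv

theorem IsAdmissible.mem_spectrum (hr : 0 < r) (hL : IsAdmissible r L)
    (hH : IsSchrodingerOp (limitPotential r L) H) (hE : |E - 2| ≤ r) :
    (E : ℂ) ∈ spectrum ℂ H := by
  refine mem_spectrum_of_quasimodes fun ε hε => ?_
  obtain ⟨k, hk⟩ := ((tendsto_amplitude r).eventually_lt_const (half_pos hε)).exists
  obtain ⟨e, u, he, hu⟩ := hL.exists_isPeriodicEigenfunction hr hE k
  obtain ⟨ψ, hψ, hle⟩ := hu.exists_quasimode (stagePeriod_pos hL.pos k) hH
    (amplitude_pos hr k).le (by linarith [hL.le_sq_mul k])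
    fun n => limitPotential_eq_approximant r hL.pos
  refine ⟨ψ, hψ, ?_⟩
  calc ‖H ψ - (E : ℂ) • ψ‖ = ‖(H ψ - (e : ℂ) • ψ) + ((e - E : ℝ) : ℂ) • ψ‖ := by
        congr 1
        push_cast
        module
    _ ≤ amplitude r k * ‖ψ‖ + amplitude r k * ‖ψ‖ := by
        refine norm_add_le_of_le hle ?_
        rw [norm_smul, Complex.norm_real]
        gcongr
        exact he
    _ = 2 * amplitude r k * ‖ψ‖ := by ring
    _ ≤ ε * ‖ψ‖ := by
        gcongr
        linarith

end Spectrum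

section TransferMatrixGrowth

variable {r E e ε : ℝ} {L : ℕ → ℕ} {k : ℕ} {u : ℤ → ℝ}

theorem abs_sub_approximant_le (hr : 0 < r) (L : ℕ → ℕ) (hE : |E - 2| ≤ r)
    (he : |e - E| ≤ amplitude r k) (n : ℤ) : |e - approximant r L k n| ≤ 6 * r + 2 := by
  have hA := amplitude_le hr k
  have hV := abs_le.1 (abs_limitPotential_le hr L n)
  have hdiff := abs_le.1 (abs_limitPotential_sub_approximant_le hr L k n)
  rw [abs_le] at hE he ⊢
  constructor <;> linarith

theorem IsAdmissible.logNormRate_lt (hr : 0 < r) (hL : IsAdmissible r L) (hE : |E - 2| ≤ r)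
    (he : |e - E| ≤ amplitude r k)
    (hu : IsPeriodicEigenfunction (approximant r L k) (stagePeriod L k) e u) :
    logNormRate (limitPotential r L) e (stagePeriod L k * L k) < 1 / (k + 1) := by
  set p := stagePeriod L k
  have hp : 0 < p := stagePeriod_pos hL.pos k
  have hLk := hL.pos k
  have hgrowth := hu.opNorm_transferMatrix_mul_le (periodic_approximant r hL.pos k) hp
    (abs_sub_approximant_le hr L hE he) (L k)
  have hone := one_le_norm_of_det_eq_one (det_transferMatrix (approximant r L k) e (p * L k))
  rw [← opNorm_eq_norm] at hone
  have hperiod : L k ≤ p * L k := Nat.le_mul_of_pos_left _ hp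
  rw [logNormRate_congr (V' := approximant r L k) fun n hn =>
    limitPotential_eq_approximant r hL.pos ⟨by positivity, by exact_mod_cast hn⟩, logNormRate]
  calc 1 / ((p * L k : ℕ) : ℝ) * Real.log (opNorm (transferMatrix (approximant r L k) e (p * L k)))
      ≤ 1 / L k * Real.log (1 + L k * ((6 * r + 2 + 1) ^ p + 1)) := by
        gcongr
        exact Real.log_nonneg hone
    _ = Real.log (1 + L k * ((6 * r + 3) ^ p + 1)) / L k := by
        rw [one_div_mul_eq_div]
        norm_num [add_assoc]
    _ < 1 / (k + 1) := hL.log_lt k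

theorem IsAdmissible.mem_closure_setOf_logNormRate_lt (hr : 0 < r) (hL : IsAdmissible r L)
    (hE : |E - 2| ≤ r) (hε : 0 < ε) (N : ℕ) :
    E ∈ closure {e | ∃ n ≥ N, logNormRate (limitPotential r L) e n < ε} := by
  refine Metric.mem_closure_iff.2 fun δ hδ => ?_
  obtain ⟨k, hkδ, hkε, hkN⟩ := (((tendsto_amplitude r).eventually_lt_const hδ).and
    ((tendsto_one_div_add_atTop_nhds_zero_nat.eventually_lt_const hε).and
      (eventually_ge_atTop N))).exists
  obtain ⟨e, u, he, hu⟩ := hL.exists_isPeriodicEigenfunction hr hE k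
  refine ⟨e, ⟨stagePeriod L k * L k, ?_, (hL.logNormRate_lt hr hE he hu).trans hkε⟩, ?_⟩
  · exact hkN.trans <| (hL.lt k).le.trans <|
      Nat.le_mul_of_pos_left _ (stagePeriod_pos hL.pos k)
  · rw [dist_comm, Real.dist_eq]
    exact he.trans_lt hkδ

theorem IsAdmissible.exists_dense_isGδ_liminf_logNormRate_eq_zero (hr : 0 < r)
    (hL : IsAdmissible r L) : ∃ G : Set ℝ, IsGδ G ∧ Dense G ∧ ∀ E ∈ G ∩ Metric.closedBall 2 r,
      liminf (fun N => logNormRate (limitPotential r L) E N) atTop = 0 :=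
  exists_dense_isGδ_liminf_eq_zero (continuous_logNormRate _) (fun N E => logNormRate_nonneg _ E N)
    Metric.isClosed_closedBall fun _ hε N _ hE => hL.mem_closure_setOf_logNormRate_lt hr hE hε N

end TransferMatrixGrowth

theorem statement0_general {s : Set ℝ} (hbdd : Bornology.IsBounded s)
    (hs : s ⊆ closure (interior s)) :
    ∃ (V : ℤ → ℝ) (H : lp (fun _ : ℤ => ℂ) 2 →L[ℂ] lp (fun _ : ℤ => ℂ) 2),
      (∃ C : ℝ, ∀ n : ℤ, |V n| ≤ C) ∧ IsLimitPeriodic V ∧ IsSchrodingerOp V H ∧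
      (∀ E ∈ s, (E : ℂ) ∈ spectrum ℂ H) ∧
      (∃ G : Set s, IsGδ G ∧ Dense G ∧
        ∀ x ∈ G, Filter.liminf (fun N : ℕ => logNormRate V (x : ℝ) N) Filter.atTop = 0) := by
  obtain ⟨r, hr, hsr⟩ := hbdd.subset_closedBall_lt 0 2
  obtain ⟨L, hL⟩ := exists_isAdmissible hr
  obtain ⟨H, hH⟩ := exists_isSchrodingerOp (abs_limitPotential_le hr L)
  obtain ⟨G, hGδ, hdense, hG⟩ := hL.exists_dense_isGδ_liminf_logNormRate_eq_zero hr
  exact ⟨limitPotential r L, H, ⟨2 * r, abs_limitPotential_le hr L⟩,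
    isLimitPeriodic_limitPotential hr hL.pos, hH, fun E hE => hL.mem_spectrum hr hH (hsr hE),
    {x | (x : ℝ) ∈ G}, hGδ.preimage continuous_subtype_val,
    dense_preimage_coe_of_subset_closure hs fun E _ => hdense E,
    fun x hx => hG x ⟨hx, hsr x.2⟩⟩

/-- there is a bounded limit-periodic potential `V` and a Schrödinger
operator `H` with potential `V` such that `σ(H)` contains `[-4,4]` and the set of
`E ∈ [-4,4]` where `liminf (1/N) log‖A_N(E,V)‖ = 0` contains a dense Gδ subset
of `[-4,4]`. -/
theorem statement0 :
    ∃ (V : ℤ → ℝ) (H : lp (fun _ : ℤ => ℂ) 2 →L[ℂ] lp (fun _ : ℤ => ℂ) 2),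
      (∃ C : ℝ, ∀ n : ℤ, |V n| ≤ C) ∧ IsLimitPeriodic V ∧ IsSchrodingerOp V H ∧
      (∀ E ∈ Set.Icc (-4 : ℝ) 4, (E : ℂ) ∈ spectrum ℂ H) ∧
      (∃ G : Set (Set.Icc (-4 : ℝ) 4), IsGδ G ∧ Dense G ∧
        ∀ x ∈ G, Filter.liminf (fun N : ℕ => logNormRate V (x : ℝ) N) Filter.atTop = 0) :=
  statement0_general (Metric.isBounded_Icc _ _) (closure_interior_Icc (by norm_num)).ge
end

section
/- Let à be a 2×2 real matrix with det à = 1, let v and v⊥ be orthonormal vectors in ℝ² (with the standard inner product), and let a ∈ ℝ. Then there exists h ∈ {1,2} such that ⟨v, Ã^h v⟩ + a·⟨v⊥, Ã^h v⟩ ≠ 0. -/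
open Filter Matrix

/-!
By Cayley–Hamilton, an endomorphism `f` of a free module of rank `n` satisfies
`± det f + c₁ f + ⋯ + cₙ fⁿ = 0`. Hence a submodule containing `f x, …, fⁿ x` also contains
`det f • x`. For `n = 2`, take for the submodule the kernel of `⟨v + a • v⊥, ·⟩`: it does not
contain `v`, since `⟨v + a • v⊥, v⟩ = 1`.
-/

theorem det_smul_mem_of_forall_pow_apply_mem {R M : Type*} [CommRing R] [AddCommGroup M]
    [Module R M] [Module.Finite R M] [Module.Free R M] (f : Module.End R M) (N : Submodule R M)
    (x : M) (hN : ∀ k ∈ Finset.Icc 1 (Module.finrank R M), (f ^ k) x ∈ N) :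
    LinearMap.det f • x ∈ N := by
  nontriviality M
  have : Nontrivial R := Module.nontrivial R M
  have cayley_hamilton : ∑ i ∈ Finset.range (Module.finrank R M),
      f.charpoly.coeff (i + 1) • (f ^ (i + 1)) x + f.charpoly.coeff 0 • x = 0 := by
    simpa only [Polynomial.aeval_eq_sum_range, LinearMap.charpoly_natDegree,
      Finset.sum_range_succ', pow_zero, LinearMap.add_apply, LinearMap.sum_apply,
      LinearMap.smul_apply, Module.End.one_apply, LinearMap.zero_apply]
      using LinearMap.congr_fun f.aeval_self_charpoly x
  have sum_mem : ∑ i ∈ Finset.range (Module.finrank R M),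
      f.charpoly.coeff (i + 1) • (f ^ (i + 1)) x ∈ N :=
    N.sum_mem fun i hi ↦ N.smul_mem _ <|
      hN (i + 1) (Finset.mem_Icc.mpr ⟨Nat.le_add_left 1 i, Finset.mem_range.mp hi⟩)
  have coeff_zero_smul_mem : f.charpoly.coeff 0 • x ∈ N :=
    (N.add_mem_iff_right sum_mem).mp (cayley_hamilton ▸ N.zero_mem)
  rw [LinearMap.det_eq_sign_charpoly_coeff, mul_smul]
  exact N.smul_mem _ coeff_zero_smul_mem

theorem statement9_general {R n : Type*} [CommRing R] [Fintype n] [DecidableEq n]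
    (A : Matrix n n R) (v w : n → R) (hvw : A.det * (w ⬝ᵥ v) ≠ 0) :
    ∃ h ∈ Finset.Icc 1 (Fintype.card n), w ⬝ᵥ ((A ^ h).mulVec v) ≠ 0 := by
  contrapose! hvw
  nontriviality R
  have det_smul_mem_ker : LinearMap.det A.toLin' • v ∈ LinearMap.ker (dotProductBilin R R w) :=
    det_smul_mem_of_forall_pow_apply_mem A.toLin' _ v fun k hk ↦ by
      rw [Module.finrank_fintype_fun_eq_card] at hk
      simpa only [LinearMap.mem_ker, dotProductBilin_apply_apply, ← Matrix.toLin'_pow,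
        Matrix.toLin'_apply] using hvw k hk
  simpa only [LinearMap.det_toLin', map_smul, LinearMap.mem_ker, dotProductBilin_apply_apply,
    smul_eq_mul] using det_smul_mem_ker

/-- for an `SL(2,ℝ)` matrix `Ã`, orthonormal `v, v⊥` and `a ∈ ℝ`,
some `h ∈ {1,2}` has `⟨v, Ã^h v⟩ + a⟨v⊥, Ã^h v⟩ ≠ 0`. -/
theorem statement9 (A : Matrix (Fin 2) (Fin 2) ℝ) (hdet : A.det = 1)
    (v vperp : Fin 2 → ℝ)
    (hv : v ⬝ᵥ v = 1) (hvperp : vperp ⬝ᵥ vperp = 1) (hortho : v ⬝ᵥ vperp = 0)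
    (a : ℝ) :
    ∃ h ∈ ({1, 2} : Set ℕ),
      v ⬝ᵥ ((A ^ h).mulVec v) + a * (vperp ⬝ᵥ ((A ^ h).mulVec v)) ≠ 0 := by
  have hvw : A.det * ((v + a • vperp) ⬝ᵥ v) ≠ 0 := by
    simp [hdet, hv, dotProduct_comm vperp, hortho]
  simpa only [Fintype.card_fin, Finset.Icc_ofNat_ofNat, Finset.mem_insert, Finset.mem_singleton,
    Set.mem_insert_iff, Set.mem_singleton_iff, add_dotProduct, smul_dotProduct, smul_eq_mul] using
    statement9_general A v (v + a • vperp) hvw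
end

section
/- Let V : ℤ → ℝ be p-periodic (p ≥ 1) with Schrödinger operator H, and let E₀ = inf {x ∈ ℝ : (x : ℂ) ∈ σ(H)}; assume E₀ > 0. Let m₀ ≥ 1 be an integer with (E₀/5)·√m₀ > 4 and set p̃ = m₀·p. For integers m, h ≥ 1 let V̂_{m,h} be the (m+h)·p̃-periodic potential defined by V̂_{m,h}(n) = V(n) if n mod (m+h)·p̃ ∈ [0, m·p̃ − 1], and V̂_{m,h}(n) = V(n) − 2E₀/5 if n mod (m+h)·p̃ ∈ [m·p̃, (m+h)·p̃ − 1], with Schrödinger operator Ĥ_{m,h}. Then 3E₀/5 ≤ inf {x ∈ ℝ : (x : ℂ) ∈ σ(Ĥ_{m,h})} ≤ 4E₀/5. -/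
open Filter Matrix

/-!
The bottom of the spectrum is the infimum of the quadratic form over finitely supported unit
vectors. Lowering the potential by at most `d` lowers the form by at most `d`, which gives the lower
bound. For the upper bound, restrict a test vector of `H` to each of the windows of `N` periods
starting at `a + k p`, `k ∈ ℤ`. Every site lies in exactly `N` windows, while every bond lies
inside `N` or `N - 1` of them, so the energies of the pieces add up to `N` times the energy of the
vector, up to an error of twice its squared norm. By periodicity each piece can be moved into the
interval where the potential is lowered by `d`, so its energy for `H` is at least `inf σ(Ĥ) + d`
times its squared norm; dividing by `N` gives `inf σ(Ĥ) + d - 2 / N ≤ inf σ(H)`.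
-/

section Energy

open scoped Finset

lemma sum_support_norm_sq_add_right_le {G F : Type*} [AddGroup G] [NormedAddCommGroup F]
    (f : G →₀ F) (t : G) :
    ∑ n ∈ f.support, ‖f (n + t)‖ ^ 2 ≤ ∑ n ∈ f.support, ‖f n‖ ^ 2 := by
  have hzero (n : G) (hn : n ∉ f.support) : ‖f n‖ ^ 2 = 0 := by
    simp [Finsupp.notMem_support_iff.1 hn]
  have hsummable : Summable fun n => ‖f n‖ ^ 2 := (hasSum_sum_of_ne_finset_zero hzero).summable
  calc ∑ n ∈ f.support, ‖f (n + t)‖ ^ 2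
      ≤ ∑' n, ‖f (n + t)‖ ^ 2 :=
        ((Equiv.addRight t).summable_iff.2 hsummable).sum_le_tsum _ fun _ _ => sq_nonneg _
    _ = ∑' n, ‖f n‖ ^ 2 := (Equiv.addRight t).tsum_eq fun n => ‖f n‖ ^ 2
    _ = ∑ n ∈ f.support, ‖f n‖ ^ 2 := tsum_eq_sum hzero

variable {F : Type*} [NormedAddCommGroup F] [InnerProductSpace ℝ F]

/-- The quadratic form `Re ⟨Hf, f⟩` of the Schrödinger operator with potential `V` at a finitely
supported `f`; each bond `{n, n + 1}` is counted once, with weight `2`, at its left end. -/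
noncomputable def energy (V : ℤ → ℝ) (f : ℤ →₀ F) : ℝ :=
  f.sum fun n z => V n * ‖z‖ ^ 2 + 2 * inner ℝ z (f (n + 1))

lemma energy_eq_sum (V : ℤ → ℝ) {f : ℤ →₀ F} {s : Finset ℤ} (hs : f.support ⊆ s) :
    energy V f = ∑ n ∈ s, (V n * ‖f n‖ ^ 2 + 2 * inner ℝ (f n) (f (n + 1))) :=
  Finsupp.sum_of_support_subset f hs _ fun n _ => by simp

lemma energy_add_const (V : ℤ → ℝ) (c : ℝ) (f : ℤ →₀ F) :
    energy (fun n => V n + c) f = energy V f + c * ∑ n ∈ f.support, ‖f n‖ ^ 2 := by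
  simp only [energy_eq_sum _ subset_rfl, Finset.mul_sum, ← Finset.sum_add_distrib]
  exact Finset.sum_congr rfl fun n _ => by ring

lemma energy_mono {V W : ℤ → ℝ} {f : ℤ →₀ F} (h : ∀ n ∈ f.support, V n ≤ W n) :
    energy V f ≤ energy W f :=
  Finset.sum_le_sum fun n hn =>
    add_le_add_left (mul_le_mul_of_nonneg_right (h n hn) (sq_nonneg ‖f n‖)) _

lemma energy_equivMapDomain_addRight (V : ℤ → ℝ) (t : ℤ) (f : ℤ →₀ F) :
    energy V (f.equivMapDomain (Equiv.addRight t)) = energy (fun n => V (n + t)) f := by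
  simp only [energy, Finsupp.sum_equivMapDomain, Finsupp.equivMapDomain_apply,
    Equiv.coe_addRight, Equiv.addRight_symm, add_right_comm _ t, neg_add_cancel_right]

lemma sum_support_inner_sub_one (f : ℤ →₀ F) :
    ∑ n ∈ f.support, inner ℝ (f (n - 1)) (f n) = ∑ n ∈ f.support, inner ℝ (f n) (f (n + 1)) :=
  calc ∑ n ∈ f.support, inner ℝ (f (n - 1)) (f n)
      = ∑' n, inner ℝ (f (n - 1)) (f n) :=
        (tsum_eq_sum fun n hn => by simp [Finsupp.notMem_support_iff.1 hn]).symm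
    _ = ∑' n, inner ℝ (f n) (f (n + 1)) := by
        simpa using ((Equiv.addRight (1 : ℤ)).tsum_eq fun n => inner ℝ (f (n - 1)) (f n)).symm
    _ = ∑ n ∈ f.support, inner ℝ (f n) (f (n + 1)) :=
        tsum_eq_sum fun n hn => by simp [Finsupp.notMem_support_iff.1 hn]

lemma sum_energy_filter {ι : Type*} (V : ℤ → ℝ) (f : ℤ →₀ F) (K : Finset ι) (I : ι → Finset ℤ)
    (N : ℕ) (hN : ∀ n ∈ f.support, #{k ∈ K | n ∈ I k} = N) :
    ∑ k ∈ K, energy V (f.filter (· ∈ I k)) = N * energy V f -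
      ∑ n ∈ f.support, #{k ∈ K | n ∈ I k ∧ n + 1 ∉ I k} *
        (2 * inner ℝ (f n) (f (n + 1))) := by
  have hfilter (k : ι) : energy V (f.filter (· ∈ I k)) = ∑ n ∈ f.support,
      ((if n ∈ I k then V n * ‖f n‖ ^ 2 + 2 * inner ℝ (f n) (f (n + 1)) else 0) -
        if n ∈ I k ∧ n + 1 ∉ I k then 2 * inner ℝ (f n) (f (n + 1)) else 0) := by
    rw [energy_eq_sum V (Finsupp.support_filter (· ∈ I k) f ▸ Finset.filter_subset _ _)]
    refine Finset.sum_congr rfl fun n _ => ?_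
    by_cases hn : n ∈ I k <;> by_cases hn' : n + 1 ∈ I k <;> simp [hn, hn']
  simp only [hfilter]
  rw [Finset.sum_comm, energy_eq_sum V subset_rfl, Finset.mul_sum, ← Finset.sum_sub_distrib]
  refine Finset.sum_congr rfl fun n hn => ?_
  rw [Finset.sum_sub_distrib, ← Finset.sum_filter, ← Finset.sum_filter, Finset.sum_const,
    Finset.sum_const, hN n hn, nsmul_eq_mul, nsmul_eq_mul]

lemma sum_energy_filter_le {ι : Type*} (V : ℤ → ℝ) (f : ℤ →₀ F) (K : Finset ι)
    (I : ι → Finset ℤ) (N : ℕ) (hN : ∀ n ∈ f.support, #{k ∈ K | n ∈ I k} = N)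
    (hcut : ∀ n ∈ f.support, #{k ∈ K | n ∈ I k ∧ n + 1 ∉ I k} ≤ 1) :
    ∑ k ∈ K, energy V (f.filter (· ∈ I k)) ≤
      N * energy V f + 2 * ∑ n ∈ f.support, ‖f n‖ ^ 2 := by
  have hbond (n : ℤ) (hn : n ∈ f.support) : -(‖f n‖ ^ 2 + ‖f (n + 1)‖ ^ 2) ≤
      #{k ∈ K | n ∈ I k ∧ n + 1 ∉ I k} * (2 * inner ℝ (f n) (f (n + 1))) := by
    have hcut_le : (#{k ∈ K | n ∈ I k ∧ n + 1 ∉ I k} : ℝ) ≤ 1 := by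
      exact_mod_cast hcut n hn
    have hinner : -(‖f n‖ ^ 2 + ‖f (n + 1)‖ ^ 2) ≤ 2 * inner ℝ (f n) (f (n + 1)) := by
      linarith [norm_add_sq_real (f n) (f (n + 1)), sq_nonneg ‖f n + f (n + 1)‖]
    calc -(‖f n‖ ^ 2 + ‖f (n + 1)‖ ^ 2)
        ≤ -(#{k ∈ K | n ∈ I k ∧ n + 1 ∉ I k} * (‖f n‖ ^ 2 + ‖f (n + 1)‖ ^ 2)) :=
          neg_le_neg (mul_le_of_le_one_left (by positivity) hcut_le)
      _ = #{k ∈ K | n ∈ I k ∧ n + 1 ∉ I k} * -(‖f n‖ ^ 2 + ‖f (n + 1)‖ ^ 2) :=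
          (mul_neg _ _).symm
      _ ≤ _ := by gcongr
  have hsum := Finset.sum_le_sum hbond
  rw [Finset.sum_neg_distrib, Finset.sum_add_distrib] at hsum
  rw [sum_energy_filter V f K I N hN]
  linarith [sum_support_norm_sq_add_right_le f 1]

end Energy

section PeriodWindow

open scoped Finset

/-- The interval of `N` periods of length `p` starting at `a + k * p`, to which test vectors are cut
down. -/
noncomputable def periodWindow (p N : ℕ) (a k : ℤ) : Finset ℤ :=
  Finset.Ico (a + k * p) (a + (k + N) * p)

lemma mem_periodWindow {p : ℕ} (hp : 0 < p) {N : ℕ} {a k n : ℤ} :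
    n ∈ periodWindow p N a k ↔ k ∈ Finset.Ioc ((n - a) / p - N) ((n - a) / p) := by
  have hp' : (0 : ℤ) < p := by exact_mod_cast hp
  have hleft : a + k * p ≤ n ↔ k ≤ (n - a) / p := by
    rw [Int.le_ediv_iff_mul_le hp', le_sub_iff_add_le']
  have hright : n < a + (k + N) * p ↔ (n - a) / p - N < k := by
    rw [sub_lt_iff_lt_add, Int.ediv_lt_iff_lt_mul hp', sub_lt_iff_lt_add']
  rw [periodWindow, Finset.mem_Ico, Finset.mem_Ioc, hleft, hright, and_comm]

lemma exists_card_filter_mem_periodWindow {p : ℕ} (hp : 0 < p) (N : ℕ) (a : ℤ) (s : Finset ℤ) :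
    ∃ K : Finset ℤ, ∀ n ∈ s, #{k ∈ K | n ∈ periodWindow p N a k} = N := by
  refine ⟨s.biUnion fun n => Finset.Ioc ((n - a) / p - N) ((n - a) / p), fun n hn => ?_⟩
  simp only [mem_periodWindow hp, Finset.filter_mem_eq_inter]
  rw [Finset.inter_eq_right.2 (Finset.subset_biUnion_of_mem
    (fun n : ℤ => Finset.Ioc ((n - a) / p - N) ((n - a) / p)) hn)]
  simp

lemma card_filter_right_end_periodWindow_le_one {p : ℕ} (hp : 0 < p) (N : ℕ) (a n : ℤ)
    (K : Finset ℤ) :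
    #{k ∈ K | n ∈ periodWindow p N a k ∧ n + 1 ∉ periodWindow p N a k} ≤ 1 := by
  have hend {k : ℤ} (hk : k ∈ {k ∈ K | n ∈ periodWindow p N a k ∧ n + 1 ∉ periodWindow p N a k}) :
      n + 1 = a + (k + N) * p := by
    simp only [Finset.mem_filter, periodWindow, Finset.mem_Ico] at hk
    omega
  refine Finset.card_le_one.2 fun k hk l hl => ?_
  have hmul : (k + N) * (p : ℤ) = (l + N) * p := add_left_cancel ((hend hk).symm.trans (hend hl))
  exact add_right_cancel (mul_right_cancel₀ (by exact_mod_cast hp.ne') hmul)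

variable {F : Type*} [NormedAddCommGroup F] [InnerProductSpace ℝ F]

lemma energy_add_two_div_nonneg {p N : ℕ} (hp : 0 < p) (hN : 0 < N) (V : ℤ → ℝ) (a : ℤ)
    (f : ℤ →₀ F) (h : ∀ k, 0 ≤ energy V (f.filter (· ∈ periodWindow p N a k))) :
    0 ≤ energy (fun n => V n + 2 / N) f := by
  obtain ⟨K, hK⟩ := exists_card_filter_mem_periodWindow hp N a f.support
  have : (0 : ℝ) < N := by exact_mod_cast hN
  have hsum : 0 ≤ N * energy V f + 2 * ∑ n ∈ f.support, ‖f n‖ ^ 2 :=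
    (Finset.sum_nonneg fun k _ => h k).trans <| sum_energy_filter_le V f K _ N hK fun n _ =>
      card_filter_right_end_periodWindow_le_one hp N a n K
  rw [energy_add_const, show energy V f + 2 / N * ∑ n ∈ f.support, ‖f n‖ ^ 2 =
    (N * energy V f + 2 * ∑ n ∈ f.support, ‖f n‖ ^ 2) / N by field_simp]
  positivity

lemma IsPeriodic.energy_nonneg_of_periodWindow {V W : ℤ → ℝ} {p N : ℕ} (hV : IsPeriodic V p)
    {a : ℤ} (hWV : ∀ n ∈ Finset.Ico a (a + N * p), W n ≤ V n)
    (hW : ∀ f : ℤ →₀ F, 0 ≤ energy W f) {k : ℤ} {f : ℤ →₀ F}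
    (hf : f.support ⊆ periodWindow p N a k) : 0 ≤ energy V f := by
  have htranslate := hW (f.equivMapDomain (Equiv.addRight (-(k * p))))
  rw [energy_equivMapDomain_addRight] at htranslate
  refine htranslate.trans (energy_mono fun n hn => ?_)
  have hn' := hf hn
  simp only [periodWindow, Finset.mem_Ico] at hn'
  calc W (n + -(k * p)) ≤ V (n + -(k * p)) := hWV _ (Finset.mem_Ico.2 (by grind))
    _ = V n := by
      simpa using (show Function.Periodic V (p : ℤ) from hV).int_mul (-k) n

end PeriodWindow

section SpectralBottom

variable {E : Type*} [NormedAddCommGroup E] [InnerProductSpace ℂ E] [CompleteSpace E]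

lemma algebraMap_le_iff_reApplyInnerSelf {T : E →L[ℂ] E} (hT : IsSelfAdjoint T) {c : ℝ} :
    algebraMap ℝ (E →L[ℂ] E) c ≤ T ↔ ∀ x, c * ‖x‖ ^ 2 ≤ T.reApplyInnerSelf x := by
  have hsub : IsSelfAdjoint (T - algebraMap ℝ (E →L[ℂ] E) c) :=
    hT.sub (.algebraMap _ (.all c))
  have hform (x : E) : (T - algebraMap ℝ (E →L[ℂ] E) c).reApplyInnerSelf x =
      T.reApplyInnerSelf x - c * ‖x‖ ^ 2 := by
    simp [ContinuousLinearMap.reApplyInnerSelf_apply, Algebra.algebraMap_eq_smul_one,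
      inner_sub_left, inner_smul_left_eq_smul, inner_self_eq_norm_sq_to_K, ← Complex.ofReal_pow]
  simp only [ContinuousLinearMap.le_def, ContinuousLinearMap.isPositive_def', hsub, true_and,
    hform, sub_nonneg]

lemma le_sInf_spectrum_iff_reApplyInnerSelf [Nontrivial E] {T : E →L[ℂ] E}
    (hT : IsSelfAdjoint T) {c : ℝ} :
    c ≤ sInf {x : ℝ | (x : ℂ) ∈ spectrum ℂ T} ↔ ∀ x, c * ‖x‖ ^ 2 ≤ T.reApplyInnerSelf x := by
  have hspec : {x : ℝ | (x : ℂ) ∈ spectrum ℂ T} = spectrum ℝ T := spectrum.preimage_algebraMap ℂ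
  rw [hspec, le_csInf_iff (spectrum.isCompact T).bddBelow
    (ContinuousFunctionalCalculus.spectrum_nonempty T hT),
    ← algebraMap_le_iff_le_spectrum hT, algebraMap_le_iff_reApplyInnerSelf hT]

end SpectralBottom

section FinitelySupported

open scoped lp

variable {ι 𝕜 : Type*} [DecidableEq ι] [RCLike 𝕜]

/-- The inclusion of the finitely supported functions into `ℓ²(ι, 𝕜)`, which supplies the test
vectors. -/
noncomputable def finsuppToLp : (ι →₀ 𝕜) →ₗ[𝕜] ℓ²(ι, 𝕜) :=
  Finsupp.linearCombination 𝕜 fun n => lp.single 2 n (1 : 𝕜)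

lemma finsuppToLp_eq_sum (f : ι →₀ 𝕜) :
    finsuppToLp f = ∑ n ∈ f.support, lp.single 2 n (f n) := by
  simp [finsuppToLp, Finsupp.linearCombination_apply, Finsupp.sum, ← lp.single_smul]

lemma finsuppToLp_apply (f : ι →₀ 𝕜) (n : ι) : finsuppToLp f n = f n := by
  rw [finsuppToLp_eq_sum, lp.coeFn_sum, Finset.sum_apply]
  simp [lp.single_apply, Pi.single_apply, eq_comm]

lemma inner_finsuppToLp (φ : ℓ²(ι, 𝕜)) (f : ι →₀ 𝕜) :
    inner 𝕜 φ (finsuppToLp f) = ∑ n ∈ f.support, inner 𝕜 (φ n) (f n) := by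
  simp only [finsuppToLp_eq_sum, inner_sum, lp.inner_single_right]

lemma norm_finsuppToLp_sq (f : ι →₀ 𝕜) :
    ‖finsuppToLp f‖ ^ 2 = ∑ n ∈ f.support, ‖f n‖ ^ 2 := by
  rw [← inner_self_eq_norm_sq (𝕜 := 𝕜), inner_finsuppToLp, map_sum]
  simp only [finsuppToLp_apply, inner_self_eq_norm_sq]

lemma denseRange_finsuppToLp : DenseRange (finsuppToLp : (ι →₀ 𝕜) → ℓ²(ι, 𝕜)) := by
  refine fun ψ => mem_closure_of_tendsto (lp.hasSum_single (by simp) ψ) (.of_forall fun s => ?_)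
  refine ⟨∑ n ∈ s, Finsupp.single n (ψ n), ?_⟩
  simp [finsuppToLp, ← lp.single_smul]

end FinitelySupported

namespace IsSchrodingerOp

open scoped lp

variable {V W : ℤ → ℝ} {H H' : ℓ²(ℤ, ℂ) →L[ℂ] ℓ²(ℤ, ℂ)}

lemma apply_single (hH : IsSchrodingerOp V H) (n : ℤ) :
    H (lp.single 2 n (1 : ℂ)) = lp.single 2 (n + 1) (1 : ℂ) + lp.single 2 (n - 1) (1 : ℂ)
      + (V n : ℂ) • lp.single 2 n (1 : ℂ) := by
  ext k
  have hleft : k + 1 = n ↔ k = n - 1 := by omega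
  have hright : k - 1 = n ↔ k = n + 1 := by omega
  simp only [hH _ k, lp.coeFn_add, lp.coeFn_smul, Pi.add_apply, Pi.smul_apply, lp.single_apply,
    Pi.single_apply, smul_eq_mul, hleft, hright]
  by_cases hkn : k = n
  · subst hkn; ring
  · simp [hkn, add_comm]

lemma isSelfAdjoint (hH : IsSchrodingerOp V H) : IsSelfAdjoint H := by
  rw [ContinuousLinearMap.isSelfAdjoint_iff']
  ext ψ n
  calc (ContinuousLinearMap.adjoint H ψ) n
      = inner ℂ (lp.single 2 n (1 : ℂ)) (ContinuousLinearMap.adjoint H ψ) := by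
        simp [lp.inner_single_left]
    _ = inner ℂ (H (lp.single 2 n (1 : ℂ))) ψ := ContinuousLinearMap.adjoint_inner_right ..
    _ = ψ (n + 1) + ψ (n - 1) + V n * ψ n := by
        rw [hH.apply_single, inner_add_left, inner_add_left, inner_smul_left]
        simp only [lp.inner_single_left]
        simp
    _ = H ψ n := (hH ψ n).symm

lemma reApplyInnerSelf_finsuppToLp (hH : IsSchrodingerOp V H) (f : ℤ →₀ ℂ) :
    H.reApplyInnerSelf (finsuppToLp f) = energy V f := by
  have hterm (n : ℤ) : (inner ℂ (H (finsuppToLp f) n) (f n)).re =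
      V n * ‖f n‖ ^ 2 + inner ℝ (f n) (f (n + 1)) + inner ℝ (f (n - 1)) (f n) := by
    rw [hH, finsuppToLp_apply, finsuppToLp_apply, finsuppToLp_apply]
    simp only [RCLike.inner_apply, map_add, map_mul, Complex.conj_ofReal, Complex.mul_re,
      Complex.add_re, Complex.conj_re, Complex.ofReal_re, Complex.ofReal_im, Complex.conj_im,
      Complex.add_im, Complex.mul_im, Complex.sq_norm, Complex.normSq_apply, Complex.inner]
    ring
  rw [ContinuousLinearMap.reApplyInnerSelf_apply, inner_finsuppToLp, map_sum,
    energy_eq_sum V subset_rfl]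
  simp only [RCLike.re_eq_complex_re, hterm, Finset.sum_add_distrib, ← Finset.mul_sum,
    sum_support_inner_sub_one]
  ring

lemma le_specInf_iff_energy_nonneg (hH : IsSchrodingerOp V H) {c : ℝ} :
    c ≤ specInf H ↔ ∀ f : ℤ →₀ ℂ, 0 ≤ energy (fun n => V n - c) f := by
  have : Nontrivial ℓ²(ℤ, ℂ) :=
    ⟨lp.single 2 0 1, 0, fun h => by simpa using congrArg (fun ψ : ℓ²(ℤ, ℂ) => ψ 0) h⟩
  have hclosed : IsClosed {ψ | c * ‖ψ‖ ^ 2 ≤ H.reApplyInnerSelf ψ} :=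
    isClosed_le (by fun_prop) H.reApplyInnerSelf_continuous
  have hform (f : ℤ →₀ ℂ) : energy (fun n => V n - c) f =
      H.reApplyInnerSelf (finsuppToLp f) - c * ‖finsuppToLp f‖ ^ 2 := by
    simp only [sub_eq_add_neg, energy_add_const, hH.reApplyInnerSelf_finsuppToLp,
      norm_finsuppToLp_sq, neg_mul]
  rw [specInf, le_sInf_spectrum_iff_reApplyInnerSelf hH.isSelfAdjoint]
  simp only [hform, sub_nonneg]
  exact ⟨fun h f => h _, fun h ψ => denseRange_finsuppToLp.induction_on ψ hclosed h⟩

lemma specInf_sub_le (hV : IsSchrodingerOp V H) (hW : IsSchrodingerOp W H') {d : ℝ}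
    (h : ∀ n, V n - d ≤ W n) : specInf H - d ≤ specInf H' :=
  hW.le_specInf_iff_energy_nonneg.2 fun f =>
    (hV.le_specInf_iff_energy_nonneg.1 le_rfl f).trans <|
      energy_mono fun n _ => by linarith [h n]

lemma specInf_le_sub_add_two_div {p N : ℕ} (hp : 0 < p) (hN : 0 < N) (hper : IsPeriodic V p)
    (hV : IsSchrodingerOp V H) (hW : IsSchrodingerOp W H') {a : ℤ} {d : ℝ}
    (h : ∀ n ∈ Finset.Ico a (a + N * p), W n ≤ V n - d) :
    specInf H' ≤ specInf H - d + 2 / N := by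
  suffices specInf H' + d - 2 / N ≤ specInf H by linarith
  rw [hV.le_specInf_iff_energy_nonneg]
  intro f
  have hperiodic : IsPeriodic (fun n => V n - (specInf H' + d)) p := fun n => by
    simp only [hper n]
  have hwindow (k : ℤ) : 0 ≤ energy (fun n => V n - (specInf H' + d))
      (f.filter (· ∈ periodWindow p N a k)) :=
    hperiodic.energy_nonneg_of_periodWindow (fun n hn => by linarith [h n hn])
      (hW.le_specInf_iff_energy_nonneg.1 le_rfl) (k := k) fun n hn => by
        rw [Finsupp.support_filter, Finset.mem_filter] at hn
        exact hn.2
  convert energy_add_two_div_nonneg hp hN _ a f hwindow using 3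
  ring

end IsSchrodingerOp

lemma two_div_le_of_four_lt_mul_sqrt {x : ℝ} {N : ℕ} (h : 4 < x * √N) : 2 / N ≤ x := by
  have hx : 0 < x := pos_of_mul_pos_left (by linarith) (Real.sqrt_nonneg N)
  have hN : (0 : ℝ) < N := Nat.cast_pos.2 <| Nat.pos_of_ne_zero fun hN => by
    norm_num [hN] at h
  have hsqrt : √(N : ℝ) ≤ N := Real.sqrt_le_self_iff.2 (.inr (by exact_mod_cast hN))
  rw [div_le_iff₀ hN]
  nlinarith

theorem statement12_general {V Vhat : ℤ → ℝ} {p m₀ ptil m h : ℕ} (hp : 1 ≤ p)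
    (hper : IsPeriodic V p)
    {H Hhat : lp (fun _ : ℤ => ℂ) 2 →L[ℂ] lp (fun _ : ℤ => ℂ) 2} (hH : IsSchrodingerOp V H)
    (hm₀ : 1 ≤ m₀) (hptil : ptil = m₀ * p) (hh : 1 ≤ h) {d : ℝ} (hd : 0 ≤ d)
    (hVhat : ∀ n : ℤ, Vhat n =
      if n % (((m + h) * ptil : ℕ) : ℤ) < ((m * ptil : ℕ) : ℤ) then V n else V n - d)
    (hHhat : IsSchrodingerOp Vhat Hhat) :
    specInf H - d ≤ specInf Hhat ∧ specInf Hhat ≤ specInf H - d + 2 / m₀ := by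
  refine ⟨hH.specInf_sub_le hHhat fun n => ?_,
    hH.specInf_le_sub_add_two_div hp hm₀ hper hHhat (a := m * ptil) fun n hn => ?_⟩
  · rw [hVhat]
    split_ifs <;> linarith
  · obtain ⟨hleft, hright⟩ := Finset.mem_Ico.1 hn
    have : (ptil : ℤ) = m₀ * p := by exact_mod_cast hptil
    have hblock : (1 : ℤ) * ptil ≤ h * ptil := by gcongr; exact_mod_cast hh
    have hmod : n % (((m + h) * ptil : ℕ) : ℤ) = n := by
      refine Int.emod_eq_of_lt (le_trans (by positivity) hleft) ?_
      push_cast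
      linarith
    rw [hVhat, hmod, if_neg (by push_cast; exact hleft.not_gt)]

/-- lowering `V` by `2E₀/5` on `h` blocks out of `m + h` blocks of
length `p̃ = m₀ p` moves the bottom of the spectrum into `[3E₀/5, 4E₀/5]`. -/
theorem statement12 (V : ℤ → ℝ) (p : ℕ) (hp : 1 ≤ p) (hper : IsPeriodic V p)
    (H : lp (fun _ : ℤ => ℂ) 2 →L[ℂ] lp (fun _ : ℤ => ℂ) 2)
    (hH : IsSchrodingerOp V H)
    (E₀ : ℝ) (hE₀def : E₀ = specInf H) (hE₀pos : 0 < E₀)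
    (m₀ : ℕ) (hm₀ : 1 ≤ m₀) (hm₀big : 4 < E₀ / 5 * Real.sqrt m₀)
    (ptil : ℕ) (hptildef : ptil = m₀ * p)
    (Vhat : ℕ → ℕ → ℤ → ℝ)
    (Hhat : ℕ → ℕ → (lp (fun _ : ℤ => ℂ) 2 →L[ℂ] lp (fun _ : ℤ => ℂ) 2))
    (hVhat : ∀ m h : ℕ, 1 ≤ m → 1 ≤ h → ∀ n : ℤ,
      Vhat m h n =
        if n % (((m + h) * ptil : ℕ) : ℤ) < ((m * ptil : ℕ) : ℤ)
        then V n else V n - 2 * E₀ / 5)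
    (hHhat : ∀ m h : ℕ, 1 ≤ m → 1 ≤ h → IsSchrodingerOp (Vhat m h) (Hhat m h)) :
    ∀ m h : ℕ, 1 ≤ m → 1 ≤ h →
      3 * E₀ / 5 ≤ specInf (Hhat m h) ∧ specInf (Hhat m h) ≤ 4 * E₀ / 5 := by
  intro m h hm hh
  obtain ⟨hlower, hupper⟩ := statement12_general (d := 2 * E₀ / 5) hp hper hH hm₀ hptildef hh
    (by positivity) (hVhat m h hm hh) (hHhat m h hm hh)
  have hcut : 2 / (m₀ : ℝ) ≤ E₀ / 5 := two_div_le_of_four_lt_mul_sqrt hm₀big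
  exact ⟨by linarith, by linarith⟩
end
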